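/- arXiv:2207.10419 — 5 statements merged into one kernel-verified Lean document; each statement's English description precedes it below -/
import Mathlib

section
/- Let H be the operator (Hf)(x) = x·f′(x) on Schwartz functions. The map f ↦ H(1 + H)f = x·f′(x) + x·(d/dx)(x·f′(x)) is a linear bijection from the space of even Schwartz functions on ℝ onto the space of even Schwartz functions g on ℝ with g(0) = 0 and ∫_ℝ g(x) dx = 0. -/
/-!
On Schwartz space let `D` be differentiation and `X` multiplication by the coordinate, so that
`H = X D`. The commutation relation `D X = 1 + X D` turns `H (1 + H)` into `(1 + H) H = D X X D`.

Both `D` and `X` are injective and exchange even and odd functions. The range of `D` consists of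
the functions of integral zero: the primitive `∫_{-∞}^x g = -∫_x^∞ g` decays rapidly because one may
choose the tail avoiding the origin. Conjugating by the Fourier transform, the range of `X` consists
of the functions vanishing at `0`.

So an even `g` with `g(0) = 0` and `∫ g = 0` can be factored one operator at a time: `g = D G` with
`G` odd, hence `G = X u` with `u` even; evaluating `g = D X u = u + X D u` at `0` gives `u(0) = 0`,
so `u = X v` with `v` odd, and therefore `∫ v = 0` and `v = D f` with `f` even.
-/

open MeasureTheory Set

/-- A function `ℝ → ℂ` is Schwartz if it is (the underlying function of) a Schwartz map. -/
def IsSchwartz (f : ℝ → ℂ) : Prop := ∃ F : SchwartzMap ℝ ℂ, ⇑F = f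

/-- The operator `H f`, `(H f)(x) = x f'(x)`. -/
noncomputable def Hop (f : ℝ → ℂ) : ℝ → ℂ := fun x => x * deriv f x

/-- The operator `H(1 + H) f = x f' + x (x f')'`. -/
noncomputable def HonePlusH (f : ℝ → ℂ) : ℝ → ℂ :=
  fun x => Hop f x + Hop (Hop f) x

open Filter Topology FourierTransform
open SchwartzMap (derivCLM smulLeftCLM compCLMOfContinuousLinearEquiv)
open scoped SchwartzMap

section Integral

variable {α E : Type*} [NormedAddCommGroup E] [NormedSpace ℝ E]

lemma mul_norm_setIntegral_le {_ : MeasurableSpace α} {μ : Measure α} {f : α → E} {w : α → ℝ}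
    {c : ℝ} {s : Set α} (hs : MeasurableSet s) (hc : 0 ≤ c) (hw : ∀ t, 0 ≤ w t)
    (hcw : ∀ t ∈ s, c ≤ w t) (hwf : Integrable (fun t => w t * ‖f t‖) μ) :
    c * ‖∫ t in s, f t ∂μ‖ ≤ ∫ t, w t * ‖f t‖ ∂μ :=
  calc c * ‖∫ t in s, f t ∂μ‖
      ≤ c * ∫ t in s, ‖f t‖ ∂μ := by gcongr; exact norm_integral_le_integral_norm _
    _ = ∫ t in s, c * ‖f t‖ ∂μ := (integral_const_mul _ _).symm
    _ ≤ ∫ t in s, w t * ‖f t‖ ∂μ := by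
        refine integral_mono_of_nonneg (.of_forall fun t => by positivity) hwf.integrableOn ?_
        filter_upwards [ae_restrict_mem hs] with t ht
        gcongr
        exact hcw t ht
    _ ≤ ∫ t, w t * ‖f t‖ ∂μ :=
        setIntegral_le_integral hwf (.of_forall fun t => mul_nonneg (hw t) (norm_nonneg _))

lemma norm_pow_mul_integral_Iic_le {f : ℝ → E} {k : ℕ} (hf : Integrable f)
    (hk : Integrable fun t => ‖t‖ ^ k * ‖f t‖) (h0 : ∫ t, f t = 0) (x : ℝ) :
    ‖x‖ ^ k * ‖∫ t in Iic x, f t‖ ≤ ∫ t, ‖t‖ ^ k * ‖f t‖ := by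
  have tail_le {s : Set ℝ} (hs : MeasurableSet s) (hxs : ∀ t ∈ s, ‖x‖ ≤ ‖t‖) :
      ‖x‖ ^ k * ‖∫ t in s, f t‖ ≤ ∫ t, ‖t‖ ^ k * ‖f t‖ :=
    mul_norm_setIntegral_le hs (by positivity) (fun t => by positivity)
      (fun t ht => by gcongr; exact hxs t ht) hk
  rcases le_total x 0 with hx | hx
  · exact tail_le measurableSet_Iic fun t ht => abs_le_abs_of_nonpos hx ht
  · have hIoi : ∫ t in Iic x, f t = -∫ t in Ioi x, f t := by
      rw [eq_neg_iff_add_eq_zero, ← h0]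
      exact intervalIntegral.integral_Iic_add_Ioi hf.integrableOn hf.integrableOn
    rw [hIoi, norm_neg]
    exact tail_le measurableSet_Ioi fun t ht => abs_le_abs_of_nonneg hx (le_of_lt ht)

lemma hasDerivAt_integral_Iic [CompleteSpace E] {f : ℝ → E} {x : ℝ} (hf : Integrable f)
    (hx : ContinuousAt f x) : HasDerivAt (fun y => ∫ t in Iic y, f t) (f x) x := by
  have hsplit : (fun y => ∫ t in Iic y, f t) =
      fun y => (∫ t in Iic 0, f t) + ∫ t in (0 : ℝ)..y, f t := by
    ext y
    rw [← intervalIntegral.integral_Iic_sub_Iic hf.integrableOn hf.integrableOn, add_sub_cancel]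
  rw [hsplit]
  exact (intervalIntegral.integral_hasDerivAt_right hf.intervalIntegrable
    hf.aestronglyMeasurable.stronglyMeasurableAtFilter hx).const_add _

lemma integral_eq_zero_of_odd [AddGroup α] [MeasurableSpace α] [MeasurableNeg α] {μ : Measure α}
    [μ.IsNegInvariant] {f : α → E} (hf : Function.Odd f) : ∫ x, f x ∂μ = 0 := by
  have hneg : ∫ x, f x ∂μ = -∫ x, f x ∂μ := by
    rw [← integral_neg, ← integral_neg_eq_self f μ]
    exact integral_congr_ae (.of_forall hf)
  have : IsAddTorsionFree E := .of_isTorsionFree ℝ E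
  exact self_eq_neg.mp hneg

end Integral

section Operators

variable (𝕜 : Type*) [RCLike 𝕜] (E : Type*) [NormedAddCommGroup E] [NormedSpace ℝ E]
  [NormedSpace 𝕜 E]

/-- The position operator `X`, i.e. `F ↦ (x ↦ x F(x))`, on Schwartz space. -/
noncomputable def positionCLM : 𝓢(ℝ, E) →L[𝕜] 𝓢(ℝ, E) :=
  smulLeftCLM E fun x : ℝ => (x : 𝕜)

/-- The reflection `F ↦ (x ↦ F(-x))` on Schwartz space; its fixed points are the even functions. -/
noncomputable def reflectionCLM : 𝓢(ℝ, E) →L[𝕜] 𝓢(ℝ, E) :=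
  compCLMOfContinuousLinearEquiv 𝕜 (ContinuousLinearEquiv.neg ℝ)

/-- The operator `H = X D`, i.e. `F ↦ (x ↦ x F'(x))`, on Schwartz space. -/
noncomputable def eulerCLM : 𝓢(ℝ, E) →L[𝕜] 𝓢(ℝ, E) :=
  positionCLM 𝕜 E ∘L derivCLM 𝕜 E

variable {𝕜 E}

@[simp]
lemma positionCLM_apply (F : 𝓢(ℝ, E)) (x : ℝ) : positionCLM 𝕜 E F x = x • F x := by
  rw [positionCLM, SchwartzMap.smulLeftCLM_apply_apply (by fun_prop),
    RCLike.real_smul_eq_coe_smul (K := 𝕜)]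

@[simp]
lemma reflectionCLM_apply (F : 𝓢(ℝ, E)) (x : ℝ) : reflectionCLM 𝕜 E F x = F (-x) := rfl

@[simp]
lemma eulerCLM_apply (F : 𝓢(ℝ, E)) (x : ℝ) : eulerCLM 𝕜 E F x = x • deriv F x := by
  simp [eulerCLM]

lemma derivCLM_positionCLM (F : 𝓢(ℝ, E)) :
    derivCLM 𝕜 E (positionCLM 𝕜 E F) = F + positionCLM 𝕜 E (derivCLM 𝕜 E F) := by
  ext x
  have hX : ⇑(positionCLM 𝕜 E F) = fun y => y • F y := funext (positionCLM_apply F)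
  have hderiv := (hasDerivAt_id x).fun_smul (F.hasDerivAt x)
  simp only [SchwartzMap.derivCLM_apply, hX, add_apply, positionCLM_apply]
  simpa [add_comm] using! hderiv.deriv

lemma eulerCLM_mul_one_add_eulerCLM_apply (F : 𝓢(ℝ, E)) :
    (eulerCLM 𝕜 E * (1 + eulerCLM 𝕜 E)) F =
      derivCLM 𝕜 E (positionCLM 𝕜 E (positionCLM 𝕜 E (derivCLM 𝕜 E F))) := by
  simp [eulerCLM, derivCLM_positionCLM]

lemma positionCLM_injective : Function.Injective (positionCLM 𝕜 E) := by
  refine (injective_iff_map_eq_zero _).2 fun F hF => DFunLike.coe_injective ?_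
  refine Continuous.ext_on (dense_compl_singleton (0 : ℝ)) F.continuous continuous_zero
    fun x hx => ?_
  have hx0 : x • F x = 0 := by simpa using congr($hF x)
  exact (smul_eq_zero.1 hx0).resolve_left hx

lemma derivCLM_injective : Function.Injective (derivCLM 𝕜 E) := by
  refine (injective_iff_map_eq_zero _).2 fun F hF => SchwartzMap.ext fun x => ?_
  have hconst (y : ℝ) : F y = F x :=
    is_const_of_deriv_eq_zero F.differentiable (fun z => congr($hF z)) y x
  have htendsto : Tendsto (fun _ : ℝ => F x) (cocompact ℝ) (𝓝 0) :=
    F.tendsto_cocompact.congr hconst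
  exact tendsto_nhds_unique tendsto_const_nhds htendsto

lemma eulerCLM_mul_one_add_eulerCLM_injective :
    Function.Injective (⇑(eulerCLM 𝕜 E * (1 + eulerCLM 𝕜 E))) := by
  have hcomp : ⇑(eulerCLM 𝕜 E * (1 + eulerCLM 𝕜 E)) =
      derivCLM 𝕜 E ∘ positionCLM 𝕜 E ∘ positionCLM 𝕜 E ∘ derivCLM 𝕜 E :=
    funext eulerCLM_mul_one_add_eulerCLM_apply
  rw [hcomp]
  exact derivCLM_injective.comp
    (positionCLM_injective.comp (positionCLM_injective.comp derivCLM_injective))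

lemma reflectionCLM_eq_self_iff {F : 𝓢(ℝ, E)} : reflectionCLM 𝕜 E F = F ↔ Function.Even F :=
  DFunLike.ext_iff

lemma reflectionCLM_eq_neg_iff {F : 𝓢(ℝ, E)} : reflectionCLM 𝕜 E F = -F ↔ Function.Odd F :=
  DFunLike.ext_iff

variable {T : 𝓢(ℝ, E) →L[𝕜] 𝓢(ℝ, E)}

lemma even_apply_iff_odd_of_anticommute (hT : Function.Injective T)
    (hR : ∀ F, T (reflectionCLM 𝕜 E F) = -reflectionCLM 𝕜 E (T F)) {F : 𝓢(ℝ, E)} :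
    Function.Even (T F) ↔ Function.Odd F := by
  rw [← reflectionCLM_eq_self_iff (𝕜 := 𝕜), ← reflectionCLM_eq_neg_iff (𝕜 := 𝕜),
    ← hT.eq_iff (b := -F), hR, map_neg, neg_inj]

lemma odd_apply_iff_even_of_anticommute (hT : Function.Injective T)
    (hR : ∀ F, T (reflectionCLM 𝕜 E F) = -reflectionCLM 𝕜 E (T F)) {F : 𝓢(ℝ, E)} :
    Function.Odd (T F) ↔ Function.Even F := by
  rw [← reflectionCLM_eq_self_iff (𝕜 := 𝕜), ← reflectionCLM_eq_neg_iff (𝕜 := 𝕜),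
    ← hT.eq_iff (b := F), hR, neg_eq_iff_eq_neg]

lemma derivCLM_reflectionCLM (F : 𝓢(ℝ, E)) :
    derivCLM 𝕜 E (reflectionCLM 𝕜 E F) = -reflectionCLM 𝕜 E (derivCLM 𝕜 E F) := by
  ext x
  exact deriv_comp_neg F x

lemma positionCLM_reflectionCLM (F : 𝓢(ℝ, E)) :
    positionCLM 𝕜 E (reflectionCLM 𝕜 E F) = -reflectionCLM 𝕜 E (positionCLM 𝕜 E F) := by
  ext x
  simp

lemma even_derivCLM_iff {F : 𝓢(ℝ, E)} : Function.Even (derivCLM 𝕜 E F) ↔ Function.Odd F :=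
  even_apply_iff_odd_of_anticommute derivCLM_injective derivCLM_reflectionCLM

lemma odd_derivCLM_iff {F : 𝓢(ℝ, E)} : Function.Odd (derivCLM 𝕜 E F) ↔ Function.Even F :=
  odd_apply_iff_even_of_anticommute derivCLM_injective derivCLM_reflectionCLM

lemma even_positionCLM_iff {F : 𝓢(ℝ, E)} : Function.Even (positionCLM 𝕜 E F) ↔ Function.Odd F :=
  even_apply_iff_odd_of_anticommute positionCLM_injective positionCLM_reflectionCLM

lemma odd_positionCLM_iff {F : 𝓢(ℝ, E)} : Function.Odd (positionCLM 𝕜 E F) ↔ Function.Even F :=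
  odd_apply_iff_even_of_anticommute positionCLM_injective positionCLM_reflectionCLM

lemma even_eulerCLM_mul_one_add_eulerCLM_iff {F : 𝓢(ℝ, E)} :
    Function.Even ((eulerCLM 𝕜 E * (1 + eulerCLM 𝕜 E)) F) ↔ Function.Even F := by
  rw [eulerCLM_mul_one_add_eulerCLM_apply, even_derivCLM_iff, odd_positionCLM_iff,
    even_positionCLM_iff, odd_derivCLM_iff]

lemma exists_schwartzMap_coe_eq {f : ℝ → E} {g : 𝓢(ℝ, E)} (hfg : ∀ x, HasDerivAt f (g x) x)
    (hf : ∀ k : ℕ, ∃ C, ∀ x, ‖x‖ ^ k * ‖f x‖ ≤ C) : ∃ F : 𝓢(ℝ, E), ⇑F = f := by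
  have hderiv : deriv f = g := funext fun x => (hfg x).deriv
  refine ⟨⟨f, ?_, fun k n => ?_⟩, rfl⟩
  · rw [contDiff_infty_iff_deriv, hderiv]
    exact ⟨fun x => (hfg x).differentiableAt, g.smooth ⊤⟩
  · cases n with
    | zero => simpa only [norm_iteratedFDeriv_zero] using hf k
    | succ n =>
      obtain ⟨C, -, hC⟩ := g.decay k n
      refine ⟨C, fun x => ?_⟩
      simpa only [norm_iteratedFDeriv_eq_norm_iteratedDeriv, iteratedDeriv_succ', hderiv]
        using hC x

lemma mem_range_derivCLM_iff [CompleteSpace E] {g : 𝓢(ℝ, E)} :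
    g ∈ range (derivCLM 𝕜 E) ↔ ∫ x, g x = 0 := by
  constructor
  · rintro ⟨F, rfl⟩
    exact integral_eq_zero_of_hasDerivAt_of_integrable F.hasDerivAt
      (derivCLM 𝕜 E F).integrable F.integrable
  · intro hg
    have hderiv (x : ℝ) : HasDerivAt (fun y => ∫ t in Iic y, g t) (g x) x :=
      hasDerivAt_integral_Iic g.integrable g.continuous.continuousAt
    obtain ⟨G, hG⟩ := exists_schwartzMap_coe_eq hderiv fun k =>
      ⟨_, norm_pow_mul_integral_Iic_le g.integrable (g.integrable_pow_mul volume k) hg⟩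
    refine ⟨G, SchwartzMap.ext fun x => ?_⟩
    rw [SchwartzMap.derivCLM_apply, hG, (hderiv x).deriv]

end Operators

section Complex

variable {E : Type*} [NormedAddCommGroup E] [NormedSpace ℂ E]

lemma fourier_derivCLM (F : 𝓢(ℝ, E)) :
    𝓕 (derivCLM ℂ E F) = (2 * Real.pi * Complex.I) • positionCLM ℂ E (𝓕 F) := by
  ext x
  have hfourier := congrFun (Real.fourier_deriv F.integrable F.differentiable
    (derivCLM ℂ E F).integrable) x
  simpa [SchwartzMap.fourier_coe, mul_smul] using! hfourier

lemma fourier_apply_zero (F : 𝓢(ℝ, E)) : 𝓕 F 0 = ∫ x, F x := by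
  simp [SchwartzMap.fourier_coe, Real.fourier_eq]

variable [CompleteSpace E]

lemma mem_range_positionCLM_iff {g : 𝓢(ℝ, E)} : g ∈ range (positionCLM ℂ E) ↔ g 0 = 0 := by
  constructor
  · rintro ⟨q, rfl⟩
    simp
  · intro hg
    have hint : ∫ x, 𝓕⁻ g x = 0 := by
      rw [← fourier_apply_zero, FourierTransform.fourier_fourierInv_eq, hg]
    obtain ⟨K, hK⟩ := (mem_range_derivCLM_iff (𝕜 := ℂ)).2 hint
    refine ⟨(2 * Real.pi * Complex.I) • 𝓕 K, ?_⟩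
    rw [map_smul, ← fourier_derivCLM, hK, FourierTransform.fourier_fourierInv_eq]

lemma exists_even_eulerCLM_mul_one_add_eulerCLM_eq {g : 𝓢(ℝ, E)} (hg : Function.Even g)
    (h0 : g 0 = 0) (hint : ∫ x, g x = 0) :
    ∃ F : 𝓢(ℝ, E), Function.Even F ∧ (eulerCLM ℂ E * (1 + eulerCLM ℂ E)) F = g := by
  obtain ⟨G, rfl⟩ := (mem_range_derivCLM_iff (𝕜 := ℂ)).2 hint
  have hG : Function.Odd G := even_derivCLM_iff.1 hg
  have : IsAddTorsionFree E := .of_isTorsionFree ℂ E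
  obtain ⟨u, rfl⟩ := mem_range_positionCLM_iff.2 hG.map_zero
  have hu : Function.Even u := odd_positionCLM_iff.1 hG
  have hu0 : u 0 = 0 := by
    simpa only [derivCLM_positionCLM, add_apply, positionCLM_apply, zero_smul, add_zero] using h0
  obtain ⟨v, rfl⟩ := mem_range_positionCLM_iff.2 hu0
  have hv : Function.Odd v := even_positionCLM_iff.1 hu
  obtain ⟨F, rfl⟩ := (mem_range_derivCLM_iff (𝕜 := ℂ)).2 (integral_eq_zero_of_odd hv)
  exact ⟨F, odd_derivCLM_iff.1 hv, eulerCLM_mul_one_add_eulerCLM_apply F⟩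

theorem stmt8_general :
    BijOn ⇑(eulerCLM ℂ E * (1 + eulerCLM ℂ E))
      {F : 𝓢(ℝ, E) | ∀ x, F (-x) = F x}
      {g : 𝓢(ℝ, E) | (∀ x, g (-x) = g x) ∧ g 0 = 0 ∧ ∫ x, g x = 0} := by
  refine ⟨fun F hF => ⟨?_, ?_, ?_⟩, eulerCLM_mul_one_add_eulerCLM_injective.injOn, ?_⟩
  · exact even_eulerCLM_mul_one_add_eulerCLM_iff.2 hF
  · exact mem_range_positionCLM_iff.1 ⟨_, rfl⟩
  · rw [← mem_range_derivCLM_iff (𝕜 := ℂ), eulerCLM_mul_one_add_eulerCLM_apply]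
    exact mem_range_self _
  · rintro g ⟨hg, h0, hint⟩
    exact exists_even_eulerCLM_mul_one_add_eulerCLM_eq hg h0 hint

end Complex

lemma image_coe_setOf (p : (ℝ → ℂ) → Prop) :
    (⇑) '' {F : 𝓢(ℝ, ℂ) | p F} = {f | IsSchwartz f ∧ p f} := by
  ext f
  constructor
  · rintro ⟨F, hF, rfl⟩
    exact ⟨⟨F, rfl⟩, hF⟩
  · rintro ⟨⟨F, rfl⟩, hF⟩
    exact ⟨F, hF, rfl⟩

lemma coe_eulerCLM_mul_one_add_eulerCLM (F : 𝓢(ℝ, ℂ)) :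
    ⇑((eulerCLM ℂ ℂ * (1 + eulerCLM ℂ ℂ)) F) = HonePlusH F := by
  have hH (F : 𝓢(ℝ, ℂ)) : ⇑(eulerCLM ℂ ℂ F) = Hop F := by
    ext x
    simp [Hop]
  ext x
  simp only [HonePlusH, ← hH]
  simp [-eulerCLM_apply]

lemma honePlusH_smul_add {f g : ℝ → ℂ} (hf : IsSchwartz f) (hg : IsSchwartz g) (a : ℂ) :
    HonePlusH (a • f + g) = a • HonePlusH f + HonePlusH g := by
  obtain ⟨F, rfl⟩ := hf
  obtain ⟨G, rfl⟩ := hg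
  have hcoe : a • ⇑F + ⇑G = ⇑(a • F + G) := rfl
  simp only [hcoe, ← coe_eulerCLM_mul_one_add_eulerCLM, map_add, map_smul]
  rfl

theorem stmt8 :
    Set.BijOn HonePlusH
      {f : ℝ → ℂ | IsSchwartz f ∧ ∀ x, f (-x) = f x}
      {g : ℝ → ℂ | IsSchwartz g ∧ (∀ x, g (-x) = g x) ∧ g 0 = 0 ∧ ∫ x : ℝ, g x = 0} ∧
    (∀ f g : ℝ → ℂ, IsSchwartz f → IsSchwartz g → ∀ a : ℂ,
      HonePlusH (a • f + g) = a • HonePlusH f + HonePlusH g) := by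
  refine ⟨?_, fun f g hf hg a => honePlusH_smul_add hf hg a⟩
  rw [← image_coe_setOf, ← image_coe_setOf]
  exact Function.Semiconj.bijOn_image coe_eulerCLM_mul_one_add_eulerCLM stmt8_general
    DFunLike.coe_injective.injOn
end

section
/- Let f be an even Schwartz function on ℝ with f(0) = 0. Then the function g defined by g(x) = f(x)/x for x ≠ 0 and g(0) = 0 is an odd Schwartz function on ℝ. -/
/-!
Since `f` is even, `f' 0 = 0`, so `g` is the difference quotient `dslope f 0`, and Hadamard's
formula `g x = ∫₀¹ f' (t x) dt` shows that it is smooth. Differentiating `x g x = f x` gives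
`x g⁽ⁿ⁾ x = f⁽ⁿ⁾ x - n g⁽ⁿ⁻¹⁾ x`. Hence `|g⁽ⁿ⁾| ≤ |f⁽ⁿ⁾| + n |g⁽ⁿ⁻¹⁾|` where `|x| ≥ 1`, and the
rapid decay of every `g⁽ⁿ⁾` follows by induction on `n`.
-/

open MeasureTheory Set

open scoped ContDiff SchwartzMap Interval

section Hadamard

variable {E : Type*} [NormedAddCommGroup E] [NormedSpace ℝ E]

theorem hasDerivAt_intervalIntegral_of_continuous {F F' : ℝ → ℝ → E} (hF : ∀ x, Continuous (F x))
    (hF' : Continuous ↿F') (hderiv : ∀ x t, HasDerivAt (F · t) (F' x t) x) (a b x : ℝ) :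
    HasDerivAt (fun y ↦ ∫ t in a..b, F y t) (∫ t in a..b, F' x t) x := by
  obtain ⟨C, hC⟩ : ∃ C, ∀ p ∈ Metric.closedBall x 1 ×ˢ [[a, b]], ‖(↿F') p‖ ≤ C :=
    ((isCompact_closedBall x 1).prod isCompact_uIcc).exists_bound_of_continuousOn hF'.continuousOn
  have hF'x : Continuous (F' x) := hF'.comp (Continuous.prodMk_right x)
  refine (intervalIntegral.hasDerivAt_integral_of_dominated_loc_of_deriv_le (bound := fun _ ↦ C)
    (Metric.closedBall_mem_nhds x one_pos) (.of_forall fun y ↦ (hF y).aestronglyMeasurable)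
    ((hF x).intervalIntegrable a b) hF'x.aestronglyMeasurable ?_
    intervalIntegrable_const (.of_forall fun t _ y _ ↦ hderiv y t)).2
  exact .of_forall fun t ht y hy ↦ hC (y, t) ⟨hy, uIoc_subset_uIcc ht⟩

theorem contDiff_intervalIntegral {n : ℕ∞} {F : ℝ → ℝ → E} (hF : ContDiff ℝ n ↿F) (a b : ℝ) :
    ContDiff ℝ n fun x ↦ ∫ t in a..b, F x t := by
  refine contDiff_iff_forall_nat_le.2 fun m hm ↦ ?_
  replace hF : ContDiff ℝ m ↿F := hF.of_le (mod_cast hm)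
  clear hm
  induction m generalizing F with
  | zero =>
    exact contDiff_zero.2 <|
      intervalIntegral.continuous_parametric_intervalIntegral_of_continuous' hF.continuous a b
  | succ m ih =>
    let F' : ℝ → ℝ → E := fun x t ↦ fderiv ℝ ↿F (x, t) (1, 0)
    have hF' : ContDiff ℝ m ↿F' := (hF.fderiv_right le_rfl).clm_apply contDiff_const
    have hderiv (x t : ℝ) : HasDerivAt (F · t) (F' x t) x :=
      HasFDerivAt.comp_hasDerivAt (l := ↿F) x (hF.differentiable (by simp) (x, t)).hasFDerivAt
        ((hasDerivAt_id x).prodMk (hasDerivAt_const x t))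
    have hint : ∀ x, HasDerivAt (fun y ↦ ∫ t in a..b, F y t) (∫ t in a..b, F' x t) x :=
      hasDerivAt_intervalIntegral_of_continuous
        (fun x ↦ hF.continuous.comp (Continuous.prodMk_right x)) hF'.continuous hderiv a b
    push_cast
    refine contDiff_succ_iff_deriv.2 ⟨fun x ↦ (hint x).differentiableAt, by simp, ?_⟩
    rw [funext fun x ↦ (hint x).deriv]
    exact ih hF'

theorem dslope_eq_integral_deriv [CompleteSpace E] {f : ℝ → E} (hf : ContDiff ℝ 1 f) (a x : ℝ) :
    dslope f a x = ∫ t in (0 : ℝ)..1, deriv f (a + t * (x - a)) := by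
  rcases eq_or_ne x a with rfl | hxa
  · simp
  · have hFTC : (x - a) • ∫ t in (0 : ℝ)..1, deriv f (a + t * (x - a)) = f (a + (x - a)) - f a :=
      intervalIntegral.integral_unitInterval_deriv_eq_sub
        ((hf.continuous_deriv le_rfl).comp (by fun_prop)).continuousOn
        fun t _ ↦ (hf.differentiable one_ne_zero _).hasDerivAt
    rw [add_sub_cancel, ← sub_smul_dslope] at hFTC
    exact (smul_right_injective E (sub_ne_zero.2 hxa) hFTC).symm

theorem contDiff_dslope [CompleteSpace E] {n : ℕ∞} {f : ℝ → E} (hf : ContDiff ℝ (n + 1) f)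
    (a : ℝ) : ContDiff ℝ n (dslope f a) := by
  have hline : ContDiff ℝ n fun p : ℝ × ℝ ↦ a + p.2 * (p.1 - a) := by fun_prop
  rw [funext (dslope_eq_integral_deriv (hf.of_le le_add_self) a)]
  exact contDiff_intervalIntegral ((contDiff_succ_iff_deriv.1 hf).2.2.comp hline) 0 1

end Hadamard

section Even

theorem odd_deriv_of_even {𝕜 E : Type*} [NontriviallyNormedField 𝕜] [NormedAddCommGroup E]
    [NormedSpace 𝕜 E] {f : 𝕜 → E} (hf : Function.Even f) : Function.Odd (deriv f) := fun x ↦ by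
  rw [← neg_neg (deriv f (-x)), ← deriv_comp_neg, funext hf]

theorem dslope_zero_eq_of_even {E : Type*} [NormedAddCommGroup E] [NormedSpace ℝ E] {f : ℝ → E}
    (hf : Function.Even f) (h0 : f 0 = 0) :
    dslope f 0 = fun x ↦ if x = 0 then 0 else x⁻¹ • f x := by
  have : IsAddTorsionFree E := .of_isTorsionFree ℝ E
  funext x
  split_ifs with hx
  · rw [hx, dslope_same, (odd_deriv_of_even hf).map_zero]
  · rw [dslope_of_ne f hx, slope_def_module, h0, sub_zero, sub_zero]

end Even

section IteratedDeriv

variable {𝕜 E : Type*} [NontriviallyNormedField 𝕜] [NormedAddCommGroup E] [NormedSpace 𝕜 E]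
  {n : ℕ} {g : 𝕜 → E} {x : 𝕜}

-- At `n = 0` the truncated `n - 1` is harmless, its coefficient being `0`.
theorem iteratedDeriv_sub_smul (hg : ContDiffAt 𝕜 n g x) (a : 𝕜) :
    iteratedDeriv n (fun y ↦ (y - a) • g y) x =
      (x - a) • iteratedDeriv n g x + n • iteratedDeriv (n - 1) g x := by
  have hderiv : deriv (fun y : 𝕜 ↦ y - a) = fun _ ↦ 1 := by simp
  have hLeibniz : iteratedDeriv n (fun y ↦ (y - a) • g y) x = ∑ i ∈ .range (n + 1),
      n.choose i • iteratedDeriv i (fun y ↦ y - a) x • iteratedDeriv (n - i) g x := by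
    simpa only [iteratedDerivWithin_univ, Pi.smul_def'] using iteratedDerivWithin_smul (mem_univ x)
      uniqueDiffOn_univ (f := fun y ↦ y - a) (by fun_prop) hg.contDiffWithinAt
  rw [hLeibniz]
  cases n with
  | zero => simp
  | succ n =>
    rw [Finset.sum_range_succ', Finset.sum_range_succ', Finset.sum_eq_zero]
    · simp [iteratedDeriv_succ', hderiv, add_comm]
    · intro i _
      simp [iteratedDeriv_succ', hderiv]

theorem norm_sub_mul_norm_iteratedDeriv_le (hg : ContDiffAt 𝕜 n g x) (a : 𝕜) :
    ‖x - a‖ * ‖iteratedDeriv n g x‖ ≤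
      ‖iteratedDeriv n (fun y ↦ (y - a) • g y) x‖ + n * ‖iteratedDeriv (n - 1) g x‖ := by
  rw [← norm_smul, eq_sub_of_add_eq (iteratedDeriv_sub_smul hg a).symm]
  exact (norm_sub_le _ _).trans (add_le_add_right (norm_nsmul_le ..) _)

end IteratedDeriv

theorem bddAbove_range_of_continuous_of_le_dist {X : Type*} [PseudoMetricSpace X] [ProperSpace X]
    {u : X → ℝ} (hu : Continuous u) {a : X} {r C : ℝ} (hC : ∀ x, r ≤ dist x a → u x ≤ C) :
    BddAbove (range u) := by
  obtain ⟨K, hK⟩ := ((isCompact_closedBall a r).image hu).bddAbove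
  refine ⟨max K C, forall_mem_range.2 fun x ↦ ?_⟩
  rcases le_total (dist x a) r with hx | hx
  · exact le_max_of_le_left (hK (mem_image_of_mem u hx))
  · exact le_max_of_le_right (hC x hx)

section Division

variable {E : Type*} [NormedAddCommGroup E] [NormedSpace ℝ E] {a : ℝ} {g : ℝ → E}

theorem bddAbove_range_pow_mul_norm_iteratedDeriv_of_pred (hg : ContDiff ℝ ∞ g) (f : 𝓢(ℝ, E))
    (hfg : ∀ x, (x - a) • g x = f x) {k n : ℕ} {B : ℝ}
    (hB : ∀ x, n * (‖x‖ ^ k * ‖iteratedDeriv (n - 1) g x‖) ≤ B) :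
    BddAbove (range fun x ↦ ‖x‖ ^ k * ‖iteratedDeriv n g x‖) := by
  have hcont : Continuous (iteratedDeriv n g) := hg.continuous_iteratedDeriv n (mod_cast le_top)
  refine bddAbove_range_of_continuous_of_le_dist (by fun_prop) (a := a) (r := 1)
    (C := SchwartzMap.seminorm ℝ k n f + B) fun x hx ↦ ?_
  have hrec : ‖x - a‖ * ‖iteratedDeriv n g x‖ ≤
      ‖iteratedDeriv n f x‖ + n * ‖iteratedDeriv (n - 1) g x‖ := by
    simpa only [hfg] using
      norm_sub_mul_norm_iteratedDeriv_le (hg.contDiffAt.of_le (mod_cast le_top)) a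
  calc ‖x‖ ^ k * ‖iteratedDeriv n g x‖
      ≤ ‖x‖ ^ k * (‖iteratedDeriv n f x‖ + n * ‖iteratedDeriv (n - 1) g x‖) := by
        gcongr
        exact (le_mul_of_one_le_left (norm_nonneg _) hx).trans hrec
    _ = ‖x‖ ^ k * ‖iteratedDeriv n f x‖ + n * (‖x‖ ^ k * ‖iteratedDeriv (n - 1) g x‖) := by ring
    _ ≤ SchwartzMap.seminorm ℝ k n f + B := add_le_add (f.le_seminorm' ℝ k n x) (hB x)

theorem bddAbove_range_pow_mul_norm_iteratedDeriv (hg : ContDiff ℝ ∞ g) (f : 𝓢(ℝ, E))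
    (hfg : ∀ x, (x - a) • g x = f x) (k n : ℕ) :
    BddAbove (range fun x ↦ ‖x‖ ^ k * ‖iteratedDeriv n g x‖) := by
  induction n with
  | zero => exact bddAbove_range_pow_mul_norm_iteratedDeriv_of_pred hg f hfg (B := 0) (by simp)
  | succ n ih =>
    obtain ⟨C, hC⟩ := ih
    exact bddAbove_range_pow_mul_norm_iteratedDeriv_of_pred hg f hfg fun x ↦
      mul_le_mul_of_nonneg_left (hC (mem_range_self x)) (Nat.cast_nonneg _)

theorem exists_schwartzMap_eq_of_sub_smul_eq (hg : ContDiff ℝ ∞ g) (f : 𝓢(ℝ, E))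
    (hfg : ∀ x, (x - a) • g x = f x) : ∃ G : 𝓢(ℝ, E), ⇑G = g := by
  refine ⟨⟨g, hg, fun k n ↦ ?_⟩, rfl⟩
  obtain ⟨C, hC⟩ := bddAbove_range_pow_mul_norm_iteratedDeriv hg f hfg k n
  refine ⟨C, fun x ↦ ?_⟩
  rw [norm_iteratedFDeriv_eq_norm_iteratedDeriv]
  exact hC (mem_range_self x)

theorem exists_schwartzMap_eq_dslope [CompleteSpace E] (f : 𝓢(ℝ, E)) (hfa : f a = 0) :
    ∃ G : 𝓢(ℝ, E), ⇑G = dslope f a :=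
  exists_schwartzMap_eq_of_sub_smul_eq (contDiff_dslope (f.smooth (⊤ + 1)) a) f
    (sub_smul_dslope_of_zero hfa)

end Division

theorem stmt9_general {E : Type*} [NormedAddCommGroup E] [NormedSpace ℝ E] [CompleteSpace E]
    (f : 𝓢(ℝ, E)) (hev : Function.Even f) (h0 : f 0 = 0) :
    (∃ G : 𝓢(ℝ, E), ⇑G = fun x ↦ if x = 0 then 0 else x⁻¹ • f x) ∧
      Function.Odd fun x ↦ if x = 0 then 0 else x⁻¹ • f x := by
  refine ⟨dslope_zero_eq_of_even hev h0 ▸ exists_schwartzMap_eq_dslope f h0, fun x ↦ ?_⟩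
  simp only [neg_eq_zero, inv_neg, neg_smul, hev x]
  split_ifs <;> simp

theorem stmt9 (f : SchwartzMap ℝ ℂ) (hev : ∀ x : ℝ, f (-x) = f x) (h0 : f 0 = 0) :
    IsSchwartz (fun x : ℝ => if x = 0 then 0 else f x / (x : ℂ)) ∧
    (∀ x : ℝ, (if (-x) = 0 then 0 else f (-x) / ((-x : ℝ) : ℂ))
      = -(if x = 0 then 0 else f x / (x : ℂ))) := by
  simpa only [IsSchwartz, Function.Odd, Complex.real_smul, Complex.ofReal_inv, ← div_eq_inv_mul]
    using stmt9_general f hev h0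
end

section
/- Let f be an even Schwartz function on ℝ such that Σ_{n=1}^∞ f(nu) = 0 for every u > 0. Then f = 0. -/
open MeasureTheory Set

/-!
Möbius inversion: if `∑ₙ ‖f (n u)‖ · d(n)` converges, where `d(n)` is the number of divisors of `n`,
then `∑ₘ μ(m) ∑ₙ f (m n u)` may be regrouped by `k = m n` as `∑ₖ (∑_{d ∣ k} μ(d)) f (k u) = f u`.
The inner sums on the left vanish by hypothesis at `m u`, so `f` vanishes on `(0, ∞)`. Evenness and
continuity at `0` do the rest. Any decay `f x = O (x⁻ˢ)` with `s > 1` gives the convergence.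
-/

open ArithmeticFunction Asymptotics Filter
open scoped ArithmeticFunction.Moebius Topology

theorem sum_divisors_moebius (n : ℕ) : ∑ d ∈ n.divisors, μ d = if n = 1 then 1 else 0 := by
  rw [← coe_mul_zeta_apply, moebius_mul_coe_zeta, one_apply]

theorem tsum_smul_apply_mul {R E : Type*} [Semiring R] [AddCommGroup E] [UniformSpace E]
    [IsUniformAddGroup E] [CompleteSpace E] [T0Space E] [Module R E] {c : ℕ → R} {g : ℕ → E}
    (h : Summable fun p : ℕ+ × ℕ+ => c p.1 • g (p.1 * p.2)) :
    ∑' p : ℕ+ × ℕ+, c p.1 • g (p.1 * p.2) = ∑' k : ℕ+, (∑ d ∈ (k : ℕ).divisors, c d) • g k := by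
  rw [← sigmaAntidiagonalEquivProd.tsum_eq]
  refine (sigmaAntidiagonalEquivProd.summable_iff.mpr h).tsum_sigma.trans (tsum_congr fun k => ?_)
  calc ∑' x : (k : ℕ).divisorsAntidiagonal, c x.1.1 • g (x.1.1 * x.1.2)
      = ∑ x ∈ (k : ℕ).divisorsAntidiagonal, c x.1 • g (x.1 * x.2) := by
        rw [tsum_fintype, Finset.sum_coe_sort _ fun x : ℕ × ℕ => c x.1 • g (x.1 * x.2)]
    _ = ∑ x ∈ (k : ℕ).divisorsAntidiagonal, c x.1 • g k :=
        Finset.sum_congr rfl fun x hx => by rw [(Nat.mem_divisorsAntidiagonal.mp hx).1]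
    _ = (∑ d ∈ (k : ℕ).divisors, c d) • g k := by
        rw [Nat.sum_divisorsAntidiagonal fun d _ => c d • g k, Finset.sum_smul]

section

variable {E : Type*} [NormedAddCommGroup E]

theorem norm_moebius_smul_le (n : ℕ) (x : E) : ‖μ n • x‖ ≤ ‖x‖ := by
  rcases moebius_eq_or n with h | h | h <;> simp [h]

theorem summable_norm_apply_mul_of_isBigO_rpow {g : ℕ → E} {s : ℝ} (hs : 1 < s)
    (hg : g =O[atTop] fun n : ℕ => (n : ℝ) ^ (-s)) :
    Summable fun p : ℕ+ × ℕ+ => ‖g (p.1 * p.2)‖ := by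
  obtain ⟨C, -, hC⟩ := bound_of_isBigO_nat_atTop hg
  have hpow : Summable fun n : ℕ+ => ((n : ℕ) : ℝ) ^ (-s) :=
    (Real.summable_nat_rpow.mpr (neg_lt_neg hs)).comp_injective PNat.coe_injective
  have hprod : Summable fun p : ℕ+ × ℕ+ => ((p.1 : ℕ) : ℝ) ^ (-s) * ((p.2 : ℕ) : ℝ) ^ (-s) :=
    hpow.mul_of_nonneg hpow (fun _ => by positivity) fun _ => by positivity
  refine (hprod.mul_left C).of_nonneg_of_le (fun _ => norm_nonneg _) fun p => ?_
  calc ‖g (p.1 * p.2)‖ ≤ C * ‖((p.1 * p.2 : ℕ) : ℝ) ^ (-s)‖ := hC (by positivity)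
    _ = C * (((p.1 : ℕ) : ℝ) ^ (-s) * ((p.2 : ℕ) : ℝ) ^ (-s)) := by
        rw [Real.norm_of_nonneg (by positivity), Nat.cast_mul,
          Real.mul_rpow (Nat.cast_nonneg _) (Nat.cast_nonneg _)]

variable [CompleteSpace E]

theorem tsum_moebius_smul_tsum {g : ℕ → E} (hg : Summable fun p : ℕ+ × ℕ+ => ‖g (p.1 * p.2)‖) :
    ∑' m : ℕ+, μ m • ∑' n : ℕ+, g (m * n) = g 1 := by
  have hμg : Summable fun p : ℕ+ × ℕ+ => μ p.1 • g (p.1 * p.2) :=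
    hg.of_norm_bounded fun p => norm_moebius_smul_le _ _
  calc ∑' m : ℕ+, μ m • ∑' n : ℕ+, g (m * n)
      = ∑' m : ℕ+, ∑' n : ℕ+, μ m • g (m * n) :=
        tsum_congr fun m => ((hg.of_norm.prod_factor m).tsum_const_smul _).symm
    _ = ∑' p : ℕ+ × ℕ+, μ p.1 • g (p.1 * p.2) := hμg.tsum_prod.symm
    _ = ∑' k : ℕ+, (∑ d ∈ (k : ℕ).divisors, μ d) • g k := tsum_smul_apply_mul hμg
    _ = g 1 := by
        rw [tsum_eq_single 1 fun k hk => by simp [sum_divisors_moebius, hk]]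
        simp

theorem eq_zero_of_pos_of_tsum_dilations_eq_zero {f : ℝ → E} {s : ℝ} (hs : 1 < s)
    (hf : f =O[atTop] fun x => x ^ (-s))
    (hsum : ∀ u : ℝ, 0 < u → ∑' n : ℕ, f ((n + 1) * u) = 0) {u : ℝ} (hu : 0 < u) : f u = 0 := by
  have hdecay : (fun n : ℕ => f (n * u)) =O[atTop] fun n : ℕ => (n : ℝ) ^ (-s) := by
    have htendsto : Tendsto (fun n : ℕ => (n : ℝ) * u) atTop atTop :=
      tendsto_natCast_atTop_atTop.atTop_mul_const hu
    refine (hf.comp_tendsto htendsto).trans ?_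
    simp only [Function.comp_def, Real.mul_rpow (Nat.cast_nonneg _) hu.le, mul_comm _ (u ^ (-s))]
    exact isBigO_const_mul_self _ _ _
  have hinner (m : ℕ+) : ∑' n : ℕ+, f (((m * n : ℕ) : ℝ) * u) = 0 := by
    rw [tsum_pnat_eq_tsum_succ (f := fun n : ℕ => f (((m * n : ℕ) : ℝ) * u)),
      ← hsum (m * u) (by positivity)]
    exact tsum_congr fun n => by push_cast; ring_nf
  have hinversion := tsum_moebius_smul_tsum (summable_norm_apply_mul_of_isBigO_rpow hs hdecay)
  simp only [hinner, smul_zero, tsum_zero, Nat.cast_one, one_mul] at hinversion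
  exact hinversion.symm

theorem stmt11_general {f : ℝ → E} {s : ℝ} (hs : 1 < s) (hf : f =O[atTop] fun x => x ^ (-s))
    (hcont : ContinuousAt f 0) (hev : f.Even)
    (hsum : ∀ u : ℝ, 0 < u → ∑' n : ℕ, f ((n + 1) * u) = 0) (x : ℝ) : f x = 0 := by
  have hpos {u : ℝ} (hu : 0 < u) : f u = 0 :=
    eq_zero_of_pos_of_tsum_dilations_eq_zero hs hf hsum hu
  rcases lt_trichotomy x 0 with hx | rfl | hx
  · rw [← hev, hpos (neg_pos.mpr hx)]
  · have hzero : f =ᶠ[𝓝[>] 0] fun _ => 0 := eventually_nhdsWithin_of_forall fun _ => hpos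
    exact tendsto_nhds_unique hcont.continuousWithinAt.tendsto
      (tendsto_const_nhds.congr' hzero.symm)
  · exact hpos hx

end

theorem stmt11 (f : SchwartzMap ℝ ℂ) (hev : ∀ x : ℝ, f (-x) = f x)
    (hsum : ∀ u : ℝ, 0 < u → ∑' n : ℕ, f ((n + 1) * u) = 0) :
    ∀ x : ℝ, f x = 0 := by
  have hdecay : f =O[atTop] fun x : ℝ => x ^ (-2 : ℝ) :=
    ((f.isBigO_cocompact_rpow (-2)).mono atTop_le_cocompact).congr' .rfl
      ((eventually_ge_atTop 0).mono fun x hx => by simp only [Real.norm_of_nonneg hx])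
  exact stmt11_general one_lt_two hdecay f.continuous.continuousAt hev hsum
end

section
/- Let f ∈ S₀^ev. Then the function s ↦ ψ_f(s) = ∫₀^∞ f(u) u^{1/2 − is} du/u on ℝ is smooth, and for all k, m ∈ ℕ there exists C > 0 such that |ψ_f^{(k)}(s)| ≤ C·(1 + |s|)^{−m} for all s ∈ ℝ. -/
/-!
Substituting `u = exp (-x)` turns the Mellin transform of `f` on the line `Re z = σ` into the
Fourier transform of `x ↦ exp (-σ x) f(exp (-x))`. For `σ > 0` this function is Schwartz: it decays
rapidly, because of the exponential factor as `x → ∞` and because `f` is Schwartz as `x → -∞`, and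
its derivative is a combination of functions of the same shape, with `f'` in place of `f` and
`σ + 1` in place of `σ`. As the Fourier transform preserves the Schwartz space, the Mellin
transform is Schwartz on the line, and `ψ_f` on the real axis is the case `σ = 1/2`.
-/

open MeasureTheory Set

/-- `ψ_f(z) = ∫₀^∞ f(u) u^{1/2 - iz} du/u`. -/
noncomputable def psi (f : ℝ → ℂ) (z : ℂ) : ℂ :=
  ∫ u in Ioi (0:ℝ), f u * (u : ℂ) ^ ((1 : ℂ)/2 - Complex.I * z) / (u : ℂ)

open Real
open scoped FourierTransform SchwartzMap ContDiff Nat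

theorem exp_mul_abs_sub_self_le {a : ℝ} {N : ℕ} (hN : 2 * a ≤ N) (x : ℝ) :
    exp (a * (|x| - x)) ≤ (1 + exp (-x)) ^ N := by
  rcases le_total 0 x with hx | hx
  · rw [abs_of_nonneg hx, sub_self, mul_zero, exp_zero]
    exact one_le_pow₀ (by linarith [exp_pos (-x)])
  · calc exp (a * (|x| - x)) = exp (2 * a * -x) := by rw [abs_of_nonpos hx]; ring_nf
      _ ≤ exp (N * -x) := by gcongr; linarith
      _ = exp (-x) ^ N := exp_nat_mul _ _
      _ ≤ (1 + exp (-x)) ^ N := by gcongr; linarith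

theorem abs_pow_le_factorial_div_mul_exp {a : ℝ} (ha : 0 < a) (k : ℕ) (x : ℝ) :
    |x| ^ k ≤ k ! / a ^ k * exp (a * |x|) := by
  have taylor := pow_div_factorial_le_exp (x := a * |x|) (by positivity) k
  rw [div_le_iff₀' (by positivity), mul_pow] at taylor
  rwa [div_mul_eq_mul_div, le_div_iff₀' (by positivity)]

section Schwartz

variable {E : Type*} [NormedAddCommGroup E] [NormedSpace ℝ E]

theorem exists_one_add_abs_pow_mul_norm_iteratedDeriv_schwartz_le (g : 𝓢(ℝ, E)) (k m : ℕ) :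
    ∃ C : ℝ, 0 < C ∧ ∀ x : ℝ, (1 + |x|) ^ m * ‖iteratedDeriv k g x‖ ≤ C := by
  set B := 2 ^ m * ((Finset.Iic (m, k)).sup fun p ↦ SchwartzMap.seminorm ℝ p.1 p.2) g
  refine ⟨max B 1, by positivity, fun x ↦ le_max_of_le_left ?_⟩
  simpa only [norm_iteratedFDeriv_eq_norm_iteratedDeriv, norm_eq_abs] using
    SchwartzMap.one_add_le_sup_seminorm_apply (𝕜 := ℝ) (m := (m, k)) le_rfl le_rfl g x

/-- The pullback of `f` under `x ↦ exp (-x)`, weighted by `exp (-a x)`; its Fourier transform is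
the Mellin transform of `f` on the vertical line of real part `a`. -/
noncomputable def expPullback (f : ℝ → E) (a x : ℝ) : E :=
  exp (-a * x) • f (exp (-x))

theorem contDiff_expPullback {f : ℝ → E} {n : WithTop ℕ∞} (hf : ContDiff ℝ n f) (a : ℝ) :
    ContDiff ℝ n (expPullback f a) := by
  unfold expPullback
  fun_prop

theorem deriv_expPullback {f : ℝ → E} (hf : Differentiable ℝ f) (a : ℝ) :
    deriv (expPullback f a) = -expPullback (deriv f) (a + 1) - a • expPullback f a := by
  funext x
  have weight : HasDerivAt (fun y ↦ exp (-a * y)) (exp (-a * x) * -a) x :=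
    (hasDerivAt_const_mul (-a)).exp
  have inner : HasDerivAt (fun y ↦ exp (-y)) (exp (-x) * -1) x := (hasDerivAt_neg x).exp
  have outer : HasDerivAt (fun y ↦ f (exp (-y))) ((exp (-x) * -1) • deriv f (exp (-x))) x :=
    (hf _).hasDerivAt.scomp x inner
  have exp_add_one : exp (-(a + 1) * x) = exp (-a * x) * exp (-x) := by
    rw [← exp_add]
    ring_nf
  refine (weight.smul outer).deriv.trans ?_
  simp only [Pi.sub_apply, Pi.neg_apply, Pi.smul_apply, expPullback, exp_add_one]
  module

theorem iteratedDeriv_succ_expPullback {f : ℝ → E} {n : ℕ} (hf : ContDiff ℝ (n + 1) f) (a x : ℝ) :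
    iteratedDeriv (n + 1) (expPullback f a) x =
      -iteratedDeriv n (expPullback (deriv f) (a + 1)) x -
        a • iteratedDeriv n (expPullback f a) x := by
  obtain ⟨differentiable, -, contDiff_deriv⟩ := contDiff_succ_iff_deriv.mp hf
  have smooth_left : ContDiffAt ℝ n (-expPullback (deriv f) (a + 1)) x :=
    (contDiff_expPullback contDiff_deriv (a + 1)).neg.contDiffAt
  have smooth_right : ContDiffAt ℝ n (a • expPullback f a) x :=
    ((contDiff_expPullback (hf.of_le le_self_add) a).const_smul a).contDiffAt
  rw [iteratedDeriv_succ', deriv_expPullback differentiable,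
    iteratedDeriv_sub smooth_left smooth_right, iteratedDeriv_neg, iteratedDeriv_const_smul_field]

theorem exists_abs_pow_mul_norm_expPullback_le (f : 𝓢(ℝ, E)) {a : ℝ} (ha : 0 < a) (k : ℕ) :
    ∃ C : ℝ, ∀ x, |x| ^ k * ‖expPullback f a x‖ ≤ C := by
  obtain ⟨N, hN⟩ := exists_nat_ge (2 * a)
  obtain ⟨B, -, hB⟩ := exists_one_add_abs_pow_mul_norm_iteratedDeriv_schwartz_le f 0 N
  refine ⟨k ! / a ^ k * B, fun x ↦ ?_⟩
  calc |x| ^ k * ‖expPullback f a x‖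
      = |x| ^ k * (exp (-a * x) * ‖f (exp (-x))‖) := by
        rw [expPullback, norm_smul, norm_of_nonneg (exp_nonneg _)]
    _ ≤ k ! / a ^ k * exp (a * |x|) * (exp (-a * x) * ‖f (exp (-x))‖) := by
        gcongr
        exact abs_pow_le_factorial_div_mul_exp ha k x
    _ = k ! / a ^ k * (exp (a * (|x| - x)) * ‖f (exp (-x))‖) := by
        rw [mul_sub, sub_eq_add_neg, ← neg_mul, exp_add]
        ring
    _ ≤ k ! / a ^ k * ((1 + exp (-x)) ^ N * ‖f (exp (-x))‖) := by
        gcongr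
        exact exp_mul_abs_sub_self_le hN x
    _ ≤ k ! / a ^ k * B := by
        gcongr
        simpa only [abs_exp, iteratedDeriv_zero] using hB (exp (-x))

theorem exists_abs_pow_mul_norm_iteratedDeriv_expPullback_le (f : 𝓢(ℝ, E)) {a : ℝ} (ha : 0 < a)
    (k n : ℕ) : ∃ C : ℝ, ∀ x, |x| ^ k * ‖iteratedDeriv n (expPullback f a) x‖ ≤ C := by
  induction n generalizing f a with
  | zero => simpa only [iteratedDeriv_zero] using exists_abs_pow_mul_norm_expPullback_le f ha k
  | succ n ih =>
    let f' := SchwartzMap.derivCLM ℝ E f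
    obtain ⟨C', hC'⟩ := ih f' (add_pos ha one_pos)
    obtain ⟨C, hC⟩ := ih f ha
    refine ⟨C' + a * C, fun x ↦ ?_⟩
    calc |x| ^ k * ‖iteratedDeriv (n + 1) (expPullback f a) x‖
        = |x| ^ k * ‖-iteratedDeriv n (expPullback f' (a + 1)) x -
            a • iteratedDeriv n (expPullback f a) x‖ := by
          rw [iteratedDeriv_succ_expPullback (f.smooth (n + 1))]
          rfl
      _ ≤ |x| ^ k * (‖iteratedDeriv n (expPullback f' (a + 1)) x‖ +
            a * ‖iteratedDeriv n (expPullback f a) x‖) := by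
          gcongr
          refine (norm_sub_le _ _).trans_eq ?_
          rw [norm_neg, norm_smul, norm_of_nonneg ha.le]
      _ = |x| ^ k * ‖iteratedDeriv n (expPullback f' (a + 1)) x‖ +
            a * (|x| ^ k * ‖iteratedDeriv n (expPullback f a) x‖) := by ring
      _ ≤ C' + a * C := by
          gcongr
          exacts [hC' x, hC x]

/-- `expPullback f a` as a Schwartz function, for `f` Schwartz and `a > 0`. -/
noncomputable def expPullbackSchwartz (f : 𝓢(ℝ, E)) {a : ℝ} (ha : 0 < a) : 𝓢(ℝ, E) where
  toFun := expPullback f a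
  smooth' := contDiff_expPullback (f.smooth ⊤) a
  decay' k n := by
    simpa only [norm_iteratedFDeriv_eq_norm_iteratedDeriv, norm_eq_abs] using
      exists_abs_pow_mul_norm_iteratedDeriv_expPullback_le f ha k n

end Schwartz

section Mellin

variable {E : Type*} [NormedAddCommGroup E] [NormedSpace ℂ E]

theorem mellin_eq_fourier_expPullback (f : ℝ → E) (z : ℂ) :
    mellin f z = 𝓕 (expPullback f z.re) ((2 * π)⁻¹ * z.im) := by
  rw [inv_mul_eq_div]
  exact mellin_eq_fourier f

/-- The Mellin transform of a Schwartz function `f` on the vertical line of real part `σ > 0`,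
parametrized as `t ↦ mellin f (σ + c t i)` with speed `c ≠ 0`, as a Schwartz function. -/
noncomputable def mellinSchwartz (f : 𝓢(ℝ, E)) {σ c : ℝ} (hσ : 0 < σ) (hc : c ≠ 0) : 𝓢(ℝ, E) :=
  SchwartzMap.compCLMOfContinuousLinearEquiv ℝ
    (ContinuousLinearEquiv.unitsEquivAut ℝ (Units.mk0 ((2 * π)⁻¹ * c) (by positivity)))
    (𝓕 (expPullbackSchwartz f hσ))

theorem mellinSchwartz_apply (f : 𝓢(ℝ, E)) {σ c : ℝ} (hσ : 0 < σ) (hc : c ≠ 0) (t : ℝ) :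
    mellinSchwartz f hσ hc t = mellin f (σ + (c * t : ℝ) * Complex.I) := by
  have re_eq : (σ + (c * t : ℝ) * Complex.I : ℂ).re = σ := by simp
  have im_eq : (σ + (c * t : ℝ) * Complex.I : ℂ).im = c * t := by simp
  rw [mellin_eq_fourier_expPullback, re_eq, im_eq, ← mul_assoc, mul_comm _ t]
  rfl

end Mellin

theorem psi_eq_mellin (f : ℝ → ℂ) (z : ℂ) : psi f z = mellin f (1 / 2 - Complex.I * z) := by
  refine setIntegral_congr_fun measurableSet_Ioi fun u hu ↦ ?_
  have hu : (u : ℂ) ≠ 0 := Complex.ofReal_ne_zero.mpr (ne_of_gt hu)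
  rw [Complex.cpow_sub _ 1 hu, Complex.cpow_one, smul_eq_mul]
  ring

/-- The restriction of `ψ_f` to the real line as a Schwartz function; the speed `-1` comes from the
exponent `1/2 - is`. -/
noncomputable def psiSchwartz (f : 𝓢(ℝ, ℂ)) : 𝓢(ℝ, ℂ) :=
  mellinSchwartz f one_half_pos (neg_ne_zero.mpr one_ne_zero)

theorem coe_psiSchwartz (f : 𝓢(ℝ, ℂ)) : ⇑(psiSchwartz f) = fun s : ℝ ↦ psi f s := by
  funext s
  rw [psi_eq_mellin, psiSchwartz, mellinSchwartz_apply]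
  congr 1
  push_cast
  ring

theorem stmt13_general (f : 𝓢(ℝ, ℂ)) :
    ContDiff ℝ ∞ (fun s : ℝ ↦ psi f s) ∧
    ∀ k m : ℕ, ∃ C : ℝ, 0 < C ∧ ∀ s : ℝ,
      ‖iteratedDeriv k (fun s : ℝ ↦ psi f s) s‖ ≤ C * (1 + |s|) ^ (-(m : ℤ)) := by
  rw [← coe_psiSchwartz]
  refine ⟨(psiSchwartz f).smooth ⊤, fun k m ↦ ?_⟩
  obtain ⟨C, hC, bound⟩ :=
    exists_one_add_abs_pow_mul_norm_iteratedDeriv_schwartz_le (psiSchwartz f) k m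
  refine ⟨C, hC, fun s ↦ ?_⟩
  rw [zpow_neg, zpow_natCast, ← div_eq_mul_inv, le_div_iff₀' (by positivity)]
  exact bound s

theorem stmt13 (f : SchwartzMap ℝ ℂ) (hev : ∀ x : ℝ, f (-x) = f x)
    (h0 : f 0 = 0) (hint : ∫ x : ℝ, f x = 0) :
    ContDiff ℝ (⊤ : ℕ∞) (fun s : ℝ => psi (⇑f) (s : ℂ)) ∧
    ∀ k m : ℕ, ∃ C : ℝ, 0 < C ∧ ∀ s : ℝ,
      ‖iteratedDeriv k (fun s : ℝ => psi (⇑f) (s : ℂ)) s‖ ≤ C * (1 + |s|) ^ (-(m:ℤ)) :=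
  stmt13_general f
end

section
/- Let s > 0 be a real number with ζ(1/2 + is) = 0, let k be a positive integer, let L = 2πk/s and μ = e^L. Then for every f ∈ S₀^ev one has ∫_1^μ (Σ_μ(ℰf))(u) u^{−is} d*u = 0. Consequently, the character u ↦ u^{is}, which is a nonzero element of L² of the circle ℝ₊*/μ^ℤ (identified with L²(ℝ/Lℤ) via u = e^t), is orthogonal to every Σ_μ(ℰf), so the closure of {Σ_μ(ℰf) : f ∈ S₀^ev} in L²(ℝ₊*/μ^ℤ) is a proper subspace; that is, the circle of length L is a ζ-cycle. -/
/-!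
Put `F(u) = ∑_{n ≥ 1} f(n u)`, so that `ℰ f (u) = u^{1/2} F(u)`. Since `L s = 2πk`, the character
`u ↦ u^{-is}` is `μ`-periodic, so the sum over `μ^ℤ` unfolds the integral over `(1, μ]` to an
integral over `(0, ∞)`, namely the Mellin transform of `F` at `1/2 - is`.

For `Re z > 1` the Mellin transform of `F` is `ζ(z)` times that of `f`. As `u F(u)` is a Riemann sum
for `∫_0^∞ f = 0` with error at most `u ∫_0^∞ |f'|`, the function `F` is bounded near `0`, its
Mellin transform is holomorphic on `Re z > 0`, and the identity continues to `z = 1/2 - is`, a zero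
of `ζ` conjugate to `1/2 + is`.

Hence the nonzero element `u^{is}` of `L²` is orthogonal to every `Σ_μ (ℰ f)`, so these functions
are not dense.
-/

open MeasureTheory Set

/-- `(ℰ f)(u) = u^{1/2} ∑_{n ≥ 1} f(n u)`. -/
noncomputable def Emap (f : ℝ → ℂ) (u : ℝ) : ℂ :=
  (u : ℂ) ^ ((1 : ℂ)/2) * ∑' n : ℕ, f ((n + 1) * u)

/-- `(Σ_μ g)(u) = ∑_{k ∈ ℤ} g(μ^k u)`. -/
noncomputable def SigmaMu (μ : ℝ) (g : ℝ → ℂ) (u : ℝ) : ℂ :=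
  ∑' k : ℤ, g (μ ^ k * u)

/-- The multiplicative Haar measure `du/u` on the fundamental domain `(1, μ]` of
`ℝ₊*/μ^ℤ`; `L²` of this measure is `L²` of the circle of length `log μ`. -/
noncomputable def circleMeasure (μ : ℝ) : Measure ℝ :=
  (volume.withDensity fun u : ℝ => ENNReal.ofReal u⁻¹).restrict (Ioc 1 μ)

open Filter Topology Asymptotics
open scoped SchwartzMap

section DilationSum

variable {E : Type*} [NormedAddCommGroup E]

/-- The sum `∑_{n ≥ 1} f(n u)` over the positive multiples of `u`, so that `ℰ f` is `u^{1/2}` times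
it. The index is shifted by one, as in `Emap`. -/
noncomputable def dilationSum (f : ℝ → E) (u : ℝ) : E :=
  ∑' n : ℕ, f ((n + 1) * u)

lemma Emap_eq_mul_dilationSum (f : ℝ → ℂ) (u : ℝ) :
    Emap f u = (u : ℂ) ^ ((1 : ℂ) / 2) * dilationSum f u :=
  rfl

lemma summable_add_one_rpow_neg {a : ℝ} (ha : 1 < a) :
    Summable fun n : ℕ => ((n : ℝ) + 1) ^ (-a) := by
  simpa using (summable_nat_add_iff 1).2 (Real.summable_nat_rpow (p := -a).2 (neg_lt_neg ha))

lemma norm_comp_add_one_mul_le {f : ℝ → E} {a C : ℝ} (hf : ∀ x, 0 < x → ‖f x‖ ≤ C * x ^ (-a))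
    {u : ℝ} (hu : 0 < u) (n : ℕ) :
    ‖f ((n + 1) * u)‖ ≤ ((n : ℝ) + 1) ^ (-a) * (C * u ^ (-a)) := by
  refine (hf _ (by positivity)).trans_eq ?_
  rw [Real.mul_rpow (by positivity) hu.le, mul_left_comm]

lemma norm_dilationSum_le {f : ℝ → E} {a C : ℝ} (ha : 1 < a)
    (hf : ∀ x, 0 < x → ‖f x‖ ≤ C * x ^ (-a)) {u : ℝ} (hu : 0 < u) :
    ‖dilationSum f u‖ ≤ (∑' n : ℕ, ((n : ℝ) + 1) ^ (-a)) * (C * u ^ (-a)) :=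
  tsum_of_norm_bounded ((summable_add_one_rpow_neg ha).hasSum.mul_right _)
    (norm_comp_add_one_mul_le hf hu)

lemma continuousOn_dilationSum [CompleteSpace E] {f : ℝ → E} (hfc : ContinuousOn f (Ioi 0))
    {a C : ℝ} (ha : 1 < a) (hf : ∀ x, 0 < x → ‖f x‖ ≤ C * x ^ (-a)) :
    ContinuousOn (dilationSum f) (Ioi 0) := by
  have hC : 0 ≤ C := by simpa using (norm_nonneg _).trans (hf 1 one_pos)
  suffices ∀ δ : ℝ, 0 < δ → ContinuousOn (dilationSum f) (Ioi δ) from fun u (hu : 0 < u) =>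
    ((this (u / 2) (half_pos hu)).continuousAt
      (Ioi_mem_nhds (half_lt_self hu))).continuousWithinAt
  intro δ hδ
  refine continuousOn_tsum (fun n => ?_)
    ((summable_add_one_rpow_neg ha).mul_right (C * δ ^ (-a))) fun n u (hu : δ < u) => ?_
  · exact hfc.comp (by fun_prop) fun u (hu : δ < u) => mul_pos n.cast_add_one_pos (hδ.trans hu)
  · refine (norm_comp_add_one_mul_le hf (hδ.trans hu) n).trans ?_
    gcongr ?_ * (_ * ?_)
    exact Real.rpow_le_rpow_of_nonpos hδ hu.le (by linarith)

end DilationSum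

section RiemannSum

variable {E : Type*} [NormedAddCommGroup E] [NormedSpace ℝ E]

lemma hasSum_integral_Ioc_nat_mul {f : ℝ → E} (hf : IntegrableOn f (Ioi 0)) {u : ℝ} (hu : 0 < u) :
    HasSum (fun n : ℕ => ∫ x in Ioc (n * u) ((n + 1) * u), f x) (∫ x in Ioi 0, f x) := by
  have hmono : Monotone fun n : ℕ => n * u := fun m n h => by dsimp only; gcongr
  have hunbdd : ¬BddAbove (range fun n : ℕ => n * u) :=
    not_bddAbove_of_tendsto_atTop (tendsto_natCast_atTop_atTop.atTop_mul_const hu)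
  have hunion := iUnion_Ioc_map_succ_eq_Ioi (fun n => hmono bot_le) hunbdd
  have hdisj := hmono.pairwise_disjoint_on_Ioc_succ
  simp only [Nat.bot_eq_zero, Nat.cast_zero, zero_mul, Nat.succ_eq_succ, Nat.cast_succ]
    at hunion hdisj
  rw [← hunion] at hf ⊢
  exact hasSum_integral_iUnion (fun _ => measurableSet_Ioc) hdisj hf

lemma norm_sub_smul_sub_integral_le [CompleteSpace E] {f f' : ℝ → E} {a b : ℝ} (hab : a ≤ b)
    (hfc : ContinuousOn f (Icc a b)) (hf : ∀ x ∈ Ioo a b, HasDerivAt f (f' x) x)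
    (hf' : IntegrableOn f' (Ioc a b)) :
    ‖(b - a) • f b - ∫ x in Ioc a b, f x‖ ≤ (b - a) * ∫ x in Ioc a b, ‖f' x‖ := by
  have hparts : (b - a) • f b - ∫ x in Ioc a b, f x = ∫ x in Ioc a b, (x - a) • f' x := by
    simpa [intervalIntegral.integral_of_le hab] using
      (intervalIntegral.integral_smul_deriv_eq_deriv_smul_of_hasDerivAt (u := fun x => x - a)
        (u' := fun _ => 1) (by fun_prop) (by rwa [uIcc_of_le hab])
        (fun x _ => (hasDerivAt_id x).sub_const a) (by simpa [hab] using hf)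
        intervalIntegrable_const
        ((intervalIntegrable_iff_integrableOn_Ioc_of_le hab).2 hf')).symm
  rw [hparts, ← integral_const_mul]
  refine norm_integral_le_of_norm_le (hf'.norm.const_mul _) ?_
  filter_upwards [ae_restrict_mem measurableSet_Ioc] with x hx
  rw [norm_smul, Real.norm_of_nonneg (sub_nonneg.2 hx.1.le)]
  gcongr
  exact hx.2

lemma norm_smul_dilationSum_sub_integral_le [CompleteSpace E] {f f' : ℝ → E}
    (hfc : ContinuousOn f (Ici 0)) (hf : ∀ x ∈ Ioi 0, HasDerivAt f (f' x) x)
    (hfi : IntegrableOn f (Ioi 0)) (hf' : IntegrableOn f' (Ioi 0)) {u : ℝ} (hu : 0 < u) :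
    ‖u • dilationSum f u - ∫ x in Ioi 0, f x‖ ≤ u * ∫ x in Ioi 0, ‖f' x‖ := by
  have hterm (n : ℕ) : ‖u • f ((n + 1) * u) - ∫ x in Ioc (n * u) ((n + 1) * u), f x‖ ≤
      u * ∫ x in Ioc (n * u) ((n + 1) * u), ‖f' x‖ := by
    have h0 : 0 ≤ n * u := by positivity
    have hlen : (n + 1) * u - n * u = u := by ring
    have h := norm_sub_smul_sub_integral_le (sub_nonneg.1 (hlen.symm ▸ hu.le))
      (hfc.mono fun x hx => h0.trans hx.1) (fun x hx => hf x (h0.trans_lt hx.1))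
      (hf'.mono_set fun x hx => h0.trans_lt hx.1)
    rwa [hlen] at h
  have hint := hasSum_integral_Ioc_nat_mul hfi hu
  have hbound := (hasSum_integral_Ioc_nat_mul hf'.norm hu).mul_left u
  have hdiff := Summable.of_norm_bounded hbound.summable hterm
  have hsum : Summable fun n : ℕ => u • f ((n + 1) * u) := by
    simpa using hdiff.add hint.summable
  rw [dilationSum, ← tsum_const_smul'', ← hint.tsum_eq, ← hsum.tsum_sub hint.summable]
  exact tsum_of_norm_bounded hbound hterm

lemma norm_dilationSum_le_integral_norm_deriv [CompleteSpace E] {f f' : ℝ → E}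
    (hfc : ContinuousOn f (Ici 0)) (hf : ∀ x ∈ Ioi 0, HasDerivAt f (f' x) x)
    (hfi : IntegrableOn f (Ioi 0)) (hf' : IntegrableOn f' (Ioi 0)) (h0 : ∫ x in Ioi 0, f x = 0)
    {u : ℝ} (hu : 0 < u) : ‖dilationSum f u‖ ≤ ∫ x in Ioi 0, ‖f' x‖ := by
  have h := norm_smul_dilationSum_sub_integral_le hfc hf hfi hf' hu
  rw [h0, sub_zero, norm_smul, Real.norm_of_nonneg hu.le] at h
  exact le_of_mul_le_mul_left h hu

lemma integral_Ioi_eq_zero_of_even {f : ℝ → E} (hf : Integrable f) (he : ∀ x, f (-x) = f x)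
    (h0 : ∫ x, f x = 0) : ∫ x in Ioi 0, f x = 0 := by
  have hsymm : ∫ x in Iic 0, f x = ∫ x in Ioi 0, f x := by
    simpa only [he, neg_zero] using integral_comp_neg_Iic 0 f
  rw [← intervalIntegral.integral_Iic_add_Ioi (b := 0) hf.integrableOn hf.integrableOn, hsymm,
    ← two_smul ℝ] at h0
  exact (smul_eq_zero_iff_right two_ne_zero).1 h0

end RiemannSum

section RapidDecay

variable {E : Type*} [NormedAddCommGroup E]

/-- A function on `(0, ∞)` is rapidly decreasing when it is continuous, bounded near `0`, and
smaller than every power at infinity; values outside `(0, ∞)` play no role. Its Mellin transform is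
holomorphic on `Re z > 0`. -/
structure RapidDecay (f : ℝ → E) : Prop where
  continuousOn : ContinuousOn f (Ioi 0)
  isBigO_zero : f =O[𝓝[>] 0] fun _ => (1 : ℝ)
  isBigO_atTop (a : ℝ) : f =O[atTop] (· ^ (-a))

namespace RapidDecay

variable [NormedSpace ℂ E] {f : ℝ → E} {z : ℂ}

lemma mellinConvergent (hf : RapidDecay f) (hz : 0 < z.re) : MellinConvergent f z :=
  mellinConvergent_of_isBigO_rpow (hf.continuousOn.locallyIntegrableOn measurableSet_Ioi)
    (hf.isBigO_atTop _) (lt_add_one z.re) (by simpa using hf.isBigO_zero) hz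

lemma differentiableAt_mellin (hf : RapidDecay f) (hz : 0 < z.re) :
    DifferentiableAt ℂ (mellin f) z :=
  mellin_differentiableAt_of_isBigO_rpow (hf.continuousOn.locallyIntegrableOn measurableSet_Ioi)
    (hf.isBigO_atTop _) (lt_add_one z.re) (by simpa using hf.isBigO_zero) hz

lemma analyticOnNhd_mellin [CompleteSpace E] (hf : RapidDecay f) :
    AnalyticOnNhd ℂ (mellin f) {z | 0 < z.re} :=
  DifferentiableOn.analyticOnNhd
    (fun _ hz => (hf.differentiableAt_mellin hz).differentiableWithinAt)
    (isOpen_lt continuous_const Complex.continuous_re)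

end RapidDecay

variable [NormedSpace ℝ E]

lemma exists_norm_schwartz_le_mul_rpow (f : 𝓢(ℝ, E)) (k : ℕ) :
    ∃ C, ∀ x, 0 < x → ‖f x‖ ≤ C * x ^ (-k : ℝ) := by
  obtain ⟨C, -, hC⟩ := f.decay k 0
  refine ⟨C, fun x hx => ?_⟩
  rw [Real.rpow_neg hx.le, Real.rpow_natCast, ← div_eq_mul_inv, le_div_iff₀' (by positivity)]
  simpa [abs_of_pos hx] using hC x

lemma rapidDecay_schwartz (f : 𝓢(ℝ, E)) : RapidDecay f where
  continuousOn := f.continuous.continuousOn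
  isBigO_zero := (f.continuous.tendsto 0).isBigO_one ℝ |>.mono nhdsWithin_le_nhds
  isBigO_atTop a := by
    refine ((f.isBigO_cocompact_rpow (-a)).mono atTop_le_cocompact).congr' .rfl ?_
    filter_upwards [eventually_ge_atTop 0] with x hx
    rw [Real.norm_of_nonneg hx]

lemma rapidDecay_dilationSum [CompleteSpace E] (f : 𝓢(ℝ, E)) (hf : ∫ x in Ioi 0, f x = 0) :
    RapidDecay (dilationSum f) where
  continuousOn := by
    obtain ⟨C, hC⟩ := exists_norm_schwartz_le_mul_rpow f 2
    exact continuousOn_dilationSum f.continuous.continuousOn one_lt_two hC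
  isBigO_zero := by
    have hf' : Integrable (deriv f) :=
      (SchwartzMap.derivCLM ℝ E f).integrable.congr (.of_forall (f.derivCLM_apply ℝ))
    refine .of_bound (∫ x in Ioi 0, ‖deriv f x‖) ?_
    filter_upwards [self_mem_nhdsWithin] with u hu
    simpa using norm_dilationSum_le_integral_norm_deriv f.continuous.continuousOn
      (fun x _ => f.hasDerivAt x) f.integrable.integrableOn hf'.integrableOn hf hu
  isBigO_atTop a := by
    obtain ⟨k, hk⟩ := exists_nat_gt (max a 1)
    obtain ⟨C, hC⟩ := exists_norm_schwartz_le_mul_rpow f k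
    have hpow : dilationSum f =O[atTop] (· ^ (-k : ℝ)) := by
      refine .of_bound ((∑' n : ℕ, ((n : ℝ) + 1) ^ (-k : ℝ)) * C) ?_
      filter_upwards [eventually_gt_atTop 0] with u hu
      rw [Real.norm_of_nonneg (by positivity), mul_assoc]
      exact norm_dilationSum_le ((le_max_right _ _).trans_lt hk) hC hu
    refine hpow.trans (.of_norm_eventuallyLE ?_)
    filter_upwards [eventually_ge_atTop 1] with u hu
    rw [Real.norm_of_nonneg (by positivity)]
    exact Real.rpow_le_rpow_of_exponent_le hu (neg_le_neg ((le_max_left _ _).trans hk.le))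

end RapidDecay

section Mellin

variable {E : Type*} [NormedAddCommGroup E] [NormedSpace ℂ E] {f : ℝ → E} {z : ℂ}

lemma integral_norm_cpow_smul_comp_mul_left (f : ℝ → E) (z : ℂ) {a : ℝ} (ha : 0 < a) :
    ∫ u in Ioi (0 : ℝ), ‖(u : ℂ) ^ (z - 1) • f (a * u)‖ =
      a ^ (-z.re) * ∫ u in Ioi (0 : ℝ), ‖(u : ℂ) ^ (z - 1) • f u‖ := by
  have hscale : EqOn (fun u : ℝ => ‖(u : ℂ) ^ (z - 1) • f (a * u)‖)
      (fun u : ℝ => a ^ (1 - z.re) * ‖((a * u : ℝ) : ℂ) ^ (z - 1) • f (a * u)‖) (Ioi 0) := by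
    intro u (hu : 0 < u)
    have hcancel : a ^ (1 - z.re) * a ^ (z.re - 1) = 1 := by
      rw [← Real.rpow_add ha, sub_add_sub_cancel, sub_self, Real.rpow_zero]
    simp only [norm_smul, Complex.norm_cpow_eq_rpow_re_of_pos hu, Complex.sub_re, Complex.one_re,
      Complex.norm_cpow_eq_rpow_re_of_pos (mul_pos ha hu), Real.mul_rpow ha.le hu.le]
    rw [← mul_assoc, ← mul_assoc, hcancel, one_mul]
  rw [setIntegral_congr_fun measurableSet_Ioi hscale, integral_const_mul,
    integral_comp_mul_left_Ioi (fun u : ℝ => ‖(u : ℂ) ^ (z - 1) • f u‖) 0 ha, mul_zero, smul_eq_mul,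
    ← mul_assoc, ← Real.rpow_neg_one, ← Real.rpow_add ha]
  ring_nf

lemma mellin_dilationSum_of_one_lt_re (hf : MellinConvergent f z) (hz : 1 < z.re) :
    mellin (dilationSum f) z = riemannZeta z • mellin f z := by
  have hint (n : ℕ) : MellinConvergent (fun u => f ((n + 1) * u)) z :=
    (MellinConvergent.comp_mul_left n.cast_add_one_pos).2 hf
  have hsum : Summable fun n : ℕ =>
      ∫ u in Ioi (0 : ℝ), ‖(u : ℂ) ^ (z - 1) • f ((n + 1) * u)‖ := by
    simp only [integral_norm_cpow_smul_comp_mul_left f z (Nat.cast_add_one_pos _)]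
    exact (summable_add_one_rpow_neg hz).mul_right _
  calc mellin (dilationSum f) z
    _ = ∑' n : ℕ, mellin (fun u => f ((n + 1) * u)) z := by
      simp only [mellin, dilationSum, ← tsum_const_smul'']
      exact (integral_tsum_of_summable_integral_norm hint hsum).symm
    _ = ∑' n : ℕ, (1 / ((n : ℂ) + 1) ^ z) • mellin f z := by
      congr 1 with n
      rw [mellin_comp_mul_left f z n.cast_add_one_pos, Complex.cpow_neg, one_div]
      norm_cast
    _ = riemannZeta z • mellin f z := by
      rw [zeta_eq_tsum_one_div_nat_add_one_cpow hz]
      refine (Summable.tsum_smul_const ?_ _)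
      simpa using (summable_nat_add_iff 1).2 (Complex.summable_one_div_nat_cpow.2 hz)

lemma exists_differentiable_eq_sub_one_mul_riemannZeta :
    ∃ G : ℂ → ℂ, Differentiable ℂ G ∧ ∀ z ≠ 1, G z = (z - 1) * riemannZeta z := by
  refine ⟨_, DirichletCharacter.differentiable_LFunctionTrivChar₁ 1, fun z hz => ?_⟩
  rw [DirichletCharacter.LFunctionTrivChar₁, Function.update_of_ne hz,
    DirichletCharacter.LFunctionTrivChar, DirichletCharacter.LFunction_modOne_eq]

-- The factor `z - 1` removes the pole of `ζ`, so the identity theorem applies on a convex domain.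
lemma mellin_dilationSum [CompleteSpace E] (hf : RapidDecay f) (hf' : RapidDecay (dilationSum f))
    (hz : 0 < z.re) (hz1 : z ≠ 1) : mellin (dilationSum f) z = riemannZeta z • mellin f z := by
  obtain ⟨G, hG, hGζ⟩ := exists_differentiable_eq_sub_one_mul_riemannZeta
  have hleft : AnalyticOnNhd ℂ (fun w => (w - 1) • mellin (dilationSum f) w) {w | 0 < w.re} :=
    (analyticOnNhd_id.sub analyticOnNhd_const).smul hf'.analyticOnNhd_mellin
  have hG' : AnalyticOnNhd ℂ G {w | 0 < w.re} := fun w _ => hG.analyticAt w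
  have hright : AnalyticOnNhd ℂ (fun w => G w • mellin f w) {w | 0 < w.re} :=
    hG'.smul hf.analyticOnNhd_mellin
  have heq : ∀ᶠ w in 𝓝 2, (w - 1) • mellin (dilationSum f) w = G w • mellin f w := by
    filter_upwards [(isOpen_lt continuous_const Complex.continuous_re).mem_nhds
      (by simp : (1 : ℝ) < (2 : ℂ).re)] with w (hw : 1 < w.re)
    rw [mellin_dilationSum_of_one_lt_re (hf.mellinConvergent (one_pos.trans hw)) hw, smul_smul,
      hGζ w (by rintro rfl; simp at hw)]
  have hcont := hleft.eqOn_of_preconnected_of_eventuallyEq hright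
    (convex_halfSpace_re_gt 0).isPreconnected (by simp : (0 : ℝ) < (2 : ℂ).re) heq hz
  simp only [hGζ z hz1, mul_smul] at hcont
  exact smul_right_injective E (sub_ne_zero.2 hz1) hcont

end Mellin

section Periodization

lemma integral_Ioc_inv_smul_comp_mul_left {E : Type*} [NormedAddCommGroup E] [NormedSpace ℝ E]
    (g : ℝ → E) {a b c : ℝ} (hab : a ≤ b) (hc : 0 < c) :
    ∫ u in Ioc a b, u⁻¹ • g (c * u) = ∫ u in Ioc (c * a) (c * b), u⁻¹ • g u := by
  have h := intervalIntegral.smul_integral_comp_mul_left (a := a) (b := b)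
    (fun u => u⁻¹ • g u) c
  rw [intervalIntegral.integral_of_le hab, intervalIntegral.integral_of_le (by gcongr),
    ← integral_smul] at h
  simpa only [smul_smul, mul_inv, mul_inv_cancel_left₀ hc.ne'] using h

lemma hasSum_integral_Ioc_zpow {E : Type*} [NormedAddCommGroup E] [NormedSpace ℝ E] {f : ℝ → E}
    (hf : IntegrableOn f (Ioi 0)) {μ : ℝ} (hμ : 1 < μ) :
    HasSum (fun k : ℤ => ∫ u in Ioc (μ ^ k) (μ ^ (k + 1)), f u) (∫ u in Ioi 0, f u) := by
  have hunion : ⋃ k : ℤ, Ioc (μ ^ k) (μ ^ (k + 1)) = Ioi 0 := by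
    refine Subset.antisymm (iUnion_subset fun k x hx => ?_) fun x hx => ?_
    · exact (zpow_pos (one_pos.trans hμ) k).trans hx.1
    · exact mem_iUnion.2 (exists_mem_Ioc_zpow hx hμ)
  rw [← hunion] at hf ⊢
  exact hasSum_integral_iUnion (fun _ => measurableSet_Ioc)
    (zpow_right_mono₀ hμ.le).pairwise_disjoint_on_Ioc_succ hf

lemma integral_Ioc_norm_inv_smul {E : Type*} [NormedAddCommGroup E] [NormedSpace ℝ E]
    (g : ℝ → E) {a : ℝ} (ha : 0 ≤ a) (b : ℝ) :
    ∫ u in Ioc a b, ‖u⁻¹ • g u‖ = ∫ u in Ioc a b, u⁻¹ • ‖g u‖ :=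
  setIntegral_congr_fun measurableSet_Ioc fun u hu => by
    simp only [norm_smul, smul_eq_mul, Real.norm_of_nonneg (inv_nonneg.2 (ha.trans hu.1.le))]

lemma integral_circleMeasure {E : Type*} [NormedAddCommGroup E] [NormedSpace ℝ E] (μ : ℝ)
    (g : ℝ → E) : ∫ u, g u ∂circleMeasure μ = ∫ u in Ioc 1 μ, u⁻¹ • g u := by
  rw [circleMeasure, setIntegral_withDensity_eq_setIntegral_toReal_smul (by fun_prop) (by simp) _
    measurableSet_Ioc]
  refine setIntegral_congr_fun measurableSet_Ioc fun u hu => ?_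
  simp only [ENNReal.toReal_ofReal (inv_nonneg.2 (one_pos.trans hu.1).le)]

lemma integral_SigmaMu_circleMeasure {μ : ℝ} (hμ : 1 < μ) {g : ℝ → ℂ}
    (hg : IntegrableOn (fun u => u⁻¹ • g u) (Ioi 0)) :
    ∫ u, SigmaMu μ g u ∂circleMeasure μ = ∫ u in Ioi 0, u⁻¹ • g u := by
  have hpos (k : ℤ) : 0 < μ ^ k := zpow_pos (one_pos.trans hμ) k
  have hpiece {E : Type} [NormedAddCommGroup E] [NormedSpace ℝ E] (h : ℝ → E) (k : ℤ) :
      ∫ u in Ioc 1 μ, u⁻¹ • h (μ ^ k * u) = ∫ u in Ioc (μ ^ k) (μ ^ (k + 1)), u⁻¹ • h u := by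
    rw [integral_Ioc_inv_smul_comp_mul_left h hμ.le (hpos k), mul_one,
      zpow_add_one₀ (one_pos.trans hμ).ne']
  have hIoc : Ioc 1 μ ⊆ Ioi 0 := fun u hu => one_pos.trans hu.1
  have hint (k : ℤ) : IntegrableOn (fun u => u⁻¹ • g (μ ^ k * u)) (Ioc 1 μ) := by
    have hdil := (integrableOn_Ioi_comp_mul_left_iff (fun u => u⁻¹ • g u) 0 (hpos k)).2
      (by rwa [mul_zero])
    refine IntegrableOn.congr_fun (hdil.smul (μ ^ k) |>.mono_measure
      (Measure.restrict_mono hIoc le_rfl)) (fun u _ => ?_) measurableSet_Ioc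
    simp only [Pi.smul_apply, smul_smul, mul_inv, mul_inv_cancel_left₀ (hpos k).ne']
  have hnorm : Summable fun k : ℤ => ∫ u in Ioc 1 μ, ‖u⁻¹ • g (μ ^ k * u)‖ := by
    refine (hasSum_integral_Ioc_zpow hg.norm hμ).summable.congr fun k => ?_
    rw [integral_Ioc_norm_inv_smul _ (hpos k).le, integral_Ioc_norm_inv_smul _ zero_le_one,
      hpiece fun u => ‖g u‖]
  rw [integral_circleMeasure, ← (hasSum_integral_Ioc_zpow hg hμ).tsum_eq]
  simp only [SigmaMu, ← tsum_const_smul'', ← hpiece]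
  exact (integral_tsum_of_summable_integral_norm hint hnorm).symm

lemma SigmaMu_mul_of_invariant {μ u : ℝ} (g : ℝ → ℂ) {χ : ℝ → ℂ}
    (hχ : ∀ k : ℤ, χ (μ ^ k * u) = χ u) :
    SigmaMu μ (fun v => g v * χ v) u = SigmaMu μ g u * χ u := by
  simp only [SigmaMu, hχ, tsum_mul_right]

lemma cpow_zpow_mul_of_cpow_eq_one {μ u : ℝ} {w : ℂ} (hμ : 0 < μ) (hu : 0 ≤ u)
    (hw : (μ : ℂ) ^ w = 1) (k : ℤ) : ((μ ^ k * u : ℝ) : ℂ) ^ w = (u : ℂ) ^ w := by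
  have hk : 0 < μ ^ k := zpow_pos hμ k
  rw [Complex.cpow_def_of_ne_zero (by exact_mod_cast hμ.ne'), ← Complex.ofReal_log hμ.le] at hw
  rw [Complex.ofReal_mul, Complex.mul_cpow_ofReal_nonneg hk.le hu,
    Complex.cpow_def_of_ne_zero (by exact_mod_cast hk.ne'), ← Complex.ofReal_log hk.le,
    Real.log_zpow, Complex.ofReal_mul, Complex.ofReal_intCast, mul_assoc, Complex.exp_int_mul, hw,
    one_zpow, one_mul]

lemma inv_smul_Emap_mul_cpow {u : ℝ} (hu : 0 < u) (f : ℝ → ℂ) (w : ℂ) :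
    u⁻¹ • (Emap f u * (u : ℂ) ^ w) = (u : ℂ) ^ (1 / 2 + w - 1) • dilationSum f u := by
  have hu' : (u : ℂ) ≠ 0 := by exact_mod_cast hu.ne'
  rw [Emap_eq_mul_dilationSum, Complex.cpow_sub _ _ hu', Complex.cpow_add _ _ hu',
    Complex.cpow_one, Complex.real_smul, smul_eq_mul]
  push_cast
  ring

lemma integral_SigmaMu_Emap_mul_cpow {μ : ℝ} {w : ℂ} (hμ : 1 < μ) (hw : (μ : ℂ) ^ w = 1)
    {f : ℝ → ℂ} (hf : MellinConvergent (dilationSum f) (1 / 2 + w)) :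
    ∫ u, SigmaMu μ (Emap f) u * (u : ℂ) ^ w ∂circleMeasure μ =
      mellin (dilationSum f) (1 / 2 + w) := by
  have hEmap : EqOn (fun u : ℝ => u⁻¹ • (Emap f u * (u : ℂ) ^ w))
      (fun u : ℝ => (u : ℂ) ^ (1 / 2 + w - 1) • dilationSum f u) (Ioi 0) :=
    fun u hu => inv_smul_Emap_mul_cpow hu f w
  calc ∫ u, SigmaMu μ (Emap f) u * (u : ℂ) ^ w ∂circleMeasure μ
    _ = ∫ u, SigmaMu μ (fun v => Emap f v * (v : ℂ) ^ w) u ∂circleMeasure μ := by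
      refine integral_congr_ae ?_
      filter_upwards [ae_restrict_mem measurableSet_Ioc] with u hu
      exact (SigmaMu_mul_of_invariant (χ := fun u : ℝ => (u : ℂ) ^ w) _
        (cpow_zpow_mul_of_cpow_eq_one (one_pos.trans hμ) (one_pos.trans hu.1).le hw)).symm
    _ = ∫ u in Ioi 0, u⁻¹ • (Emap f u * (u : ℂ) ^ w) :=
      integral_SigmaMu_circleMeasure hμ (hf.congr_fun hEmap.symm measurableSet_Ioi)
    _ = mellin (dilationSum f) (1 / 2 + w) := setIntegral_congr_fun measurableSet_Ioi hEmap

lemma integral_SigmaMu_Emap_schwartz_mul_cpow {s μ : ℝ} (hμ : 1 < μ)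
    (hχ : (μ : ℂ) ^ (Complex.I * s) = 1) (f : 𝓢(ℝ, ℂ)) (hf : ∫ x in Ioi 0, f x = 0) :
    ∫ u, SigmaMu μ (Emap f) u * (u : ℂ) ^ (-(Complex.I * s)) ∂circleMeasure μ =
      riemannZeta (1 / 2 + -(Complex.I * s)) * mellin f (1 / 2 + -(Complex.I * s)) := by
  have hre : (1 / 2 + -(Complex.I * s)).re = 1 / 2 := by simp
  have hpos : 0 < (1 / 2 + -(Complex.I * s)).re := by rw [hre]; norm_num
  have hne : 1 / 2 + -(Complex.I * s) ≠ 1 := fun h => by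
    rw [h, Complex.one_re] at hre
    norm_num at hre
  have hdecay := rapidDecay_dilationSum f hf
  rw [integral_SigmaMu_Emap_mul_cpow hμ (by rw [Complex.cpow_neg, hχ, inv_one])
    (hdecay.mellinConvergent hpos), mellin_dilationSum (rapidDecay_schwartz f) hdecay hpos hne,
    smul_eq_mul]

end Periodization

section CircleCharacter

instance isFiniteMeasure_circleMeasure (μ : ℝ) : IsFiniteMeasure (circleMeasure μ) := by
  have hinv : IntegrableOn (fun u : ℝ => u⁻¹) (Ioc 1 μ) :=
    (continuousOn_inv₀.mono fun u hu => (one_pos.trans_le hu.1).ne').integrableOn_Icc.mono_set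
      Ioc_subset_Icc_self
  rw [circleMeasure, restrict_withDensity measurableSet_Ioc]
  exact isFiniteMeasure_withDensity_ofReal hinv.2

lemma ae_circleMeasure_pos (μ : ℝ) : ∀ᵐ u ∂circleMeasure μ, 0 < u :=
  (ae_restrict_mem measurableSet_Ioc).mono fun _ hu => one_pos.trans hu.1

lemma circleMeasure_real_univ {μ : ℝ} (hμ : 1 ≤ μ) : (circleMeasure μ).real univ = Real.log μ := by
  have h := integral_circleMeasure μ fun _ => (1 : ℝ)
  simp only [integral_const, smul_eq_mul, mul_one] at h
  rw [h, ← intervalIntegral.integral_of_le hμ, integral_inv_of_pos one_pos (one_pos.trans_le hμ),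
    div_one]

lemma memLp_cpow_circleMeasure (s μ : ℝ) :
    MemLp (fun u : ℝ => (u : ℂ) ^ (Complex.I * s)) 2 (circleMeasure μ) := by
  refine MemLp.of_bound (Measurable.aestronglyMeasurable (by fun_prop)) 1 ?_
  filter_upwards [ae_circleMeasure_pos μ] with u hu
  simp [Complex.norm_cpow_eq_rpow_re_of_pos hu]

/-- The character `u ↦ u^{is}` as an element of `L²` of the circle. It is
`μ`-periodic only when `μ^{is} = 1`. -/
noncomputable def circleCharacter (s μ : ℝ) : Lp ℂ 2 (circleMeasure μ) :=
  (memLp_cpow_circleMeasure s μ).toLp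

lemma coeFn_circleCharacter (s μ : ℝ) :
    circleCharacter s μ =ᵐ[circleMeasure μ] fun u => (u : ℂ) ^ (Complex.I * s) :=
  (memLp_cpow_circleMeasure s μ).coeFn_toLp

lemma inner_circleCharacter (s : ℝ) {μ : ℝ} {g : Lp ℂ 2 (circleMeasure μ)} {h : ℝ → ℂ}
    (hg : g =ᵐ[circleMeasure μ] h) :
    inner ℂ (circleCharacter s μ) g =
      ∫ u, h u * (u : ℂ) ^ (-(Complex.I * s)) ∂circleMeasure μ := by
  rw [L2.inner_def]
  refine integral_congr_ae ?_
  filter_upwards [ae_circleMeasure_pos μ, hg, coeFn_circleCharacter s μ] with u hu hgu hχu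
  have hconj := Complex.cpow_conj (u : ℂ) (Complex.I * s)
    (by rw [Complex.arg_ofReal_of_nonneg hu.le]; exact Real.pi_pos.ne)
  rw [Complex.conj_ofReal, map_mul, Complex.conj_I, Complex.conj_ofReal, neg_mul] at hconj
  rw [hgu, hχu, RCLike.inner_apply, hconj]

lemma inner_circleCharacter_self (s : ℝ) {μ : ℝ} (hμ : 1 ≤ μ) :
    inner ℂ (circleCharacter s μ) (circleCharacter s μ) = (Real.log μ : ℂ) := by
  calc inner ℂ (circleCharacter s μ) (circleCharacter s μ)
    _ = ∫ u : ℝ, (u : ℂ) ^ (Complex.I * s) * (u : ℂ) ^ (-(Complex.I * s)) ∂circleMeasure μ :=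
      inner_circleCharacter s (coeFn_circleCharacter s μ)
    _ = ∫ _, 1 ∂circleMeasure μ := by
      refine integral_congr_ae ?_
      filter_upwards [ae_circleMeasure_pos μ] with u hu
      have hu' : (u : ℂ) ≠ 0 := by exact_mod_cast hu.ne'
      rw [← Complex.cpow_add _ _ hu', add_neg_cancel, Complex.cpow_zero]
    _ = Real.log μ := by
      rw [integral_const, circleMeasure_real_univ hμ, Complex.real_smul, mul_one]

lemma circleCharacter_ne_zero (s : ℝ) {μ : ℝ} (hμ : 1 < μ) : circleCharacter s μ ≠ 0 := by
  rw [← inner_self_ne_zero (𝕜 := ℂ), inner_circleCharacter_self s hμ.le]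
  exact_mod_cast (Real.log_pos hμ).ne'

end CircleCharacter

lemma riemannZeta_half_sub_eq_zero {s : ℝ} (hζ : riemannZeta (1 / 2 + Complex.I * s) = 0) :
    riemannZeta (1 / 2 + -(Complex.I * s)) = 0 := by
  have hconj : 1 / 2 + -(Complex.I * s) = (starRingEnd ℂ) (1 / 2 + Complex.I * s) := by
    simp [map_ofNat]
  rw [hconj, riemannZeta_conj, hζ, map_zero]

lemma exp_cpow_I_mul_eq_one {s L : ℝ} {k : ℤ} (h : L * s = 2 * Real.pi * k) :
    (Real.exp L : ℂ) ^ (Complex.I * s) = 1 := by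
  have h' : (L : ℂ) * s = 2 * Real.pi * k := by exact_mod_cast h
  rw [Complex.cpow_def_of_ne_zero (by exact_mod_cast (Real.exp_pos L).ne'),
    ← Complex.ofReal_log (Real.exp_pos L).le, Real.log_exp, Complex.exp_eq_one_iff]
  exact ⟨k, by linear_combination Complex.I * h'⟩

theorem stmt16_general {s μ : ℝ} (hμ : 1 < μ) (hχ : (μ : ℂ) ^ (Complex.I * s) = 1)
    (hζ : riemannZeta (1 / 2 + Complex.I * s) = 0) :
    (∀ f : 𝓢(ℝ, ℂ), (∫ x in Ioi 0, f x = 0) →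
      ∫ u in Ioc 1 μ, SigmaMu μ (Emap f) u * (u : ℂ) ^ (-(Complex.I * s)) / (u : ℂ) = 0) ∧
    ¬ Dense {g : Lp ℂ 2 (circleMeasure μ) | ∃ f : 𝓢(ℝ, ℂ), (∫ x in Ioi 0, f x = 0) ∧
      ∀ᵐ u ∂circleMeasure μ, g u = SigmaMu μ (Emap f) u} := by
  have hvanish (f : 𝓢(ℝ, ℂ)) (hf : ∫ x in Ioi 0, f x = 0) :
      ∫ u, SigmaMu μ (Emap f) u * (u : ℂ) ^ (-(Complex.I * s)) ∂circleMeasure μ = 0 := by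
    rw [integral_SigmaMu_Emap_schwartz_mul_cpow hμ hχ f hf, riemannZeta_half_sub_eq_zero hζ,
      zero_mul]
  refine ⟨fun f hf => ?_, fun hdense => circleCharacter_ne_zero s hμ ?_⟩
  · rw [← hvanish f hf, integral_circleMeasure]
    simp only [div_eq_inv_mul, Complex.real_smul, Complex.ofReal_inv]
  · refine hdense.eq_zero_of_inner_left ℂ ?_
    rintro g ⟨f, hf, hg⟩
    rw [inner_circleCharacter s hg, hvanish f hf]

theorem stmt16 (s : ℝ) (hs : 0 < s)
    (hζ : riemannZeta (1/2 + Complex.I * s) = 0)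
    (k : ℕ) (hk : 0 < k) (L : ℝ) (hL : L = 2 * Real.pi * k / s)
    (μ : ℝ) (hμ : μ = Real.exp L) :
    (∀ f : SchwartzMap ℝ ℂ, (∀ x : ℝ, f (-x) = f x) → f 0 = 0 → (∫ x : ℝ, f x = 0) →
      ∫ u in Ioc (1:ℝ) μ,
        SigmaMu μ (Emap (⇑f)) u * (u : ℂ) ^ (-(Complex.I * s)) / (u : ℂ) = 0) ∧
    ¬ Dense {g : Lp ℂ 2 (circleMeasure μ) |
        ∃ f : SchwartzMap ℝ ℂ, (∀ x : ℝ, f (-x) = f x) ∧ f 0 = 0 ∧ (∫ x : ℝ, f x = 0) ∧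
          ∀ᵐ u ∂(circleMeasure μ), g u = SigmaMu μ (Emap (⇑f)) u} := by
  have hμ1 : 1 < μ := by rw [hμ, Real.one_lt_exp_iff, hL]; positivity
  have hχ : (μ : ℂ) ^ (Complex.I * s) = 1 :=
    hμ ▸ exp_cpow_I_mul_eq_one (k := k) (by rw [hL, div_mul_cancel₀ _ hs.ne', Int.cast_natCast])
  obtain ⟨hvanish, hdense⟩ := stmt16_general hμ1 hχ hζ
  refine ⟨fun f he _ hf => hvanish f (integral_Ioi_eq_zero_of_even f.integrable he hf),
    fun hd => hdense (hd.mono ?_)⟩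
  rintro g ⟨f, he, -, hf, hg⟩
  exact ⟨f, integral_Ioi_eq_zero_of_even f.integrable he hf, hg⟩
end
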